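/- arXiv:2107.03171 — 2 statements merged into one kernel-verified Lean document; each statement's English description precedes it below -/
import Mathlib

section
/- Let c > 0 and a > 0, and suppose pdeg(OR_m) ≥ a·(log₂ m)^c for all m ≥ 2. Then there exists a′ > 0 such that for all n ≥ 4, every truly n-variate Boolean function f : {0,1}^n → {0,1} satisfies pdeg(f) ≥ a′·(log₂ n)^{c/(c+1)} / (log₂ log₂ n)². -/
open scoped Classical

noncomputable def evalBool {ι : Type} (a : ι → Bool) (P : MvPolynomial ι ℝ) : ℝ :=
  MvPolynomial.eval (fun i => if a i then (1:ℝ) else 0) P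

def HasProbPoly {ι : Type} (f : (ι → Bool) → Bool) (ε : ℝ) (d : ℕ) : Prop :=
  ∃ (k : ℕ) (w : Fin k → ℝ) (P : Fin k → MvPolynomial ι ℝ),
    (∀ i, 0 ≤ w i) ∧ (∑ i, w i = 1) ∧ (∀ i, (P i).totalDegree ≤ d) ∧
    ∀ a : ι → Bool,
      ∑ i ∈ Finset.univ.filter
          (fun i => evalBool a (P i) ≠ (if f a then (1:ℝ) else 0)), w i ≤ ε

noncomputable def pdeg {ι : Type} (ε : ℝ) (f : (ι → Bool) → Bool) : ℕ :=
  sInf {d | HasProbPoly f ε d}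

def TrulyVariate {ι : Type} (f : (ι → Bool) → Bool) : Prop :=
  ∀ i : ι, ∃ a, f (Function.update a i (!(a i))) ≠ f a

def ORf (n : ℕ) : (Fin n → Bool) → Bool := fun a => decide (∃ i, a i = true)

noncomputable def sensitivity {n : ℕ} (f : (Fin n → Bool) → Bool) : ℕ :=
  Finset.univ.sup (fun a : Fin n → Bool =>
    (Finset.univ.filter (fun i : Fin n => f (Function.update a i (!(a i))) ≠ f a)).card)

/-!
Let `s` be the sensitivity of `f`, `d` its probabilistic degree and `n` the number of variables.

By Simon's argument every coordinate `i` is sensitive at the indicator of a set `S i` of at most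
`2s` coordinates. Hash the coordinates into `O(s²)` buckets, and plant arbitrary bits `A` in a
fixed bucket `J`. By noise stability, for most `i ∈ J` the value of `f` is unaffected when `S i` is
enlarged to all the buckets it meets and the other bits of `A` are switched on, so that evaluating
`f` there recovers `A i`. After error reduction a probabilistic polynomial for `f` therefore
encodes `#J` bits, up to a small fraction of errors. Its restrictions to the inputs that equal `A`
on `J` and are constant on every other bucket lie in a space of dimension `s ^ O(d)`, so `#J`, and
with it `n`, is at most `s ^ O(d)`.

In the other direction, around a point of sensitivity `s` the function `f` behaves like `OR_s` on
inputs of weight at most one. A random restriction at a random scale isolates a single `1` with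
probability `Ω(1 / log n)`, and combining `O(log n)` samples on a geometric sequence of scales
turns this into a probabilistic polynomial for `OR_s` of degree `O(d (log log n)²)`.

Eliminating `log s` from `log n ≤ O(d log s)` and `a (log s) ^ c ≤ O(d (log log n)²)` bounds `d`
from below.
-/

namespace ProbDegree

open MeasureTheory Finset
open scoped Pointwise

section CubeFunctions

variable {ι κ τ : Type}

/-- The value of a bit as a real number. -/
noncomputable def bit (b : Bool) : ℝ := if b then 1 else 0

@[simp] lemma bit_true : bit true = 1 := rfl

@[simp] lemma bit_false : bit false = 0 := rfl

@[simp] lemma bit_not (b : Bool) : bit (!b) = 1 - bit b := by cases b <;> simp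

@[simp] lemma bit_eq_zero {b : Bool} : bit b = 0 ↔ b = false := by cases b <;> simp

lemma bit_injective : Function.Injective bit := by
  rintro (_ | _) (_ | _) <;> simp

/-- The space of functions on the cube given by polynomials of total degree at most `d`, as the
`d`-th power of the space of affine functions. -/
noncomputable def degLE (ι : Type) (d : ℕ) : Submodule ℝ ((ι → Bool) → ℝ) :=
  Submodule.span ℝ (insert 1 (Set.range fun i a => bit (a i))) ^ d

lemma one_le_degLE (d : ℕ) : 1 ≤ degLE ι d :=
  one_le_pow_of_one_le' (Submodule.one_le.2 (Submodule.subset_span (Set.mem_insert _ _))) d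

lemma one_mem_degLE (d : ℕ) : 1 ∈ degLE ι d := Submodule.one_le.1 (one_le_degLE d)

lemma const_mem_degLE (d : ℕ) (c : ℝ) : (fun _ => c) ∈ degLE ι d :=
  one_le_degLE d (Submodule.algebraMap_mem c)

lemma bit_mem_degLE (i : ι) : (fun a => bit (a i)) ∈ degLE ι 1 := by
  rw [degLE, pow_one]
  exact Submodule.subset_span (Set.mem_insert_of_mem _ ⟨i, rfl⟩)

lemma degLE_mono : Monotone (degLE ι) :=
  fun _ _ => pow_le_pow_right' (Submodule.one_le.2 (Submodule.subset_span (Set.mem_insert _ _)))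

lemma mul_mem_degLE {d e : ℕ} {F G : (ι → Bool) → ℝ} (hF : F ∈ degLE ι d) (hG : G ∈ degLE ι e) :
    F * G ∈ degLE ι (d + e) := by
  rw [degLE, pow_add]
  exact Submodule.mul_mem_mul hF hG

lemma pow_mem_degLE {d : ℕ} {F : (ι → Bool) → ℝ} (hF : F ∈ degLE ι d) (k : ℕ) :
    F ^ k ∈ degLE ι (d * k) := by
  rw [degLE, pow_mul]
  exact Submodule.pow_mem_pow _ hF k

lemma prod_mem_degLE (s : Finset τ) {d : τ → ℕ} {F : τ → (ι → Bool) → ℝ}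
    (hF : ∀ t ∈ s, F t ∈ degLE ι (d t)) : ∏ t ∈ s, F t ∈ degLE ι (∑ t ∈ s, d t) := by
  induction s using Finset.induction_on with
  | empty => exact one_mem_degLE 0
  | insert t s ht ih =>
    rw [prod_insert ht, sum_insert ht]
    exact mul_mem_degLE (hF t (mem_insert_self t s)) (ih fun u hu => hF u (mem_insert_of_mem hu))

lemma comp_mem_degLE {d : ℕ} {F : (ι → Bool) → ℝ} (hF : F ∈ degLE ι d)
    {y : (κ → Bool) → ι → Bool} (hy : ∀ i, (fun a => bit (y a i)) ∈ degLE κ 1) :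
    F ∘ y ∈ degLE κ d := by
  let φ : ((ι → Bool) → ℝ) →ₐ[ℝ] (κ → Bool) → ℝ := AlgHom.ofLinearMap (LinearMap.funLeft ℝ ℝ y) rfl
    fun _ _ => rfl
  have hφ : Submodule.span ℝ (insert 1 (Set.range fun i (a : ι → Bool) => bit (a i))) ≤
      (degLE κ 1).comap φ.toLinearMap := by
    rw [Submodule.span_le, Set.insert_subset_iff, Set.range_subset_iff]
    exact ⟨one_mem_degLE 1, hy⟩
  have hmap : (degLE ι d).map φ.toLinearMap ≤ degLE κ d := by
    rw [degLE, Submodule.map_pow]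
    refine (pow_le_pow_left' (Submodule.map_le_iff_le_comap.2 hφ) d).trans_eq ?_
    rw [degLE, pow_one, degLE]
  exact hmap (Submodule.mem_map_of_mem hF)

lemma finrank_degLE_le [Fintype κ] (d : ℕ) :
    Module.finrank ℝ (degLE κ d) ≤ (Fintype.card κ + 1) ^ d := by
  let s : Finset ((κ → Bool) → ℝ) := insert 1 (univ.image fun i a => bit (a i))
  have hs : #s ≤ Fintype.card κ + 1 :=
    (card_insert_le _ _).trans (Nat.add_le_add_right card_image_le 1)
  have hspan : degLE κ d = Submodule.span ℝ (↑(s ^ d) : Set ((κ → Bool) → ℝ)) := by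
    rw [degLE, Submodule.span_pow]
    simp [s]
  rw [hspan]
  exact (finrank_span_finset_le_card _).trans (card_pow_le.trans (Nat.pow_le_pow_left hs d))

lemma exists_mem_degLE [Finite ι] (F : (ι → Bool) → ℝ) : ∃ d, F ∈ degLE ι d := by
  cases nonempty_fintype ι
  have hF : F = ∑ b, F b • ∏ i, if b i then fun a => bit (a i) else 1 - fun a => bit (a i) := by
    funext a
    simp only [Finset.sum_apply, Pi.smul_apply, smul_eq_mul, Finset.prod_apply]
    rw [sum_eq_single_of_mem a (mem_univ a), prod_eq_one, mul_one]
    · intro i _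
      cases h : a i <;> simp [h]
    · intro b _ hb
      obtain ⟨i, hi⟩ := Function.ne_iff.1 hb
      rw [prod_eq_zero (mem_univ i), mul_zero]
      cases ha : a i <;> cases hb : b i <;> simp_all
  refine ⟨∑ _i : ι, 1, hF ▸ sum_mem fun b _ => Submodule.smul_mem _ _ (prod_mem_degLE _ ?_)⟩
  intro i _
  cases b i
  · exact sub_mem (one_mem_degLE 1) (bit_mem_degLE i)
  · exact bit_mem_degLE i

lemma restrictTotalDegree_one_pow_le (d : ℕ) :
    MvPolynomial.restrictTotalDegree ι ℝ 1 ^ d ≤ MvPolynomial.restrictTotalDegree ι ℝ d := by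
  induction d with
  | zero => simp [Submodule.one_le, MvPolynomial.mem_restrictTotalDegree]
  | succ d ih =>
    rw [pow_succ]
    refine (mul_le_mul_left ih _).trans (Submodule.mul_le.2 fun P hP Q hQ => ?_)
    rw [MvPolynomial.mem_restrictTotalDegree] at *
    exact (P.totalDegree_mul Q).trans (Nat.add_le_add hP hQ)

lemma degLE_le_map_restrictTotalDegree (d : ℕ) :
    degLE ι d ≤ (MvPolynomial.restrictTotalDegree ι ℝ d).map
      (MvPolynomial.aeval fun i (a : ι → Bool) => bit (a i)).toLinearMap := by
  refine le_trans ?_ (Submodule.map_mono (restrictTotalDegree_one_pow_le d))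
  rw [Submodule.map_pow]
  refine pow_le_pow_left' (Submodule.span_le.2 (Set.insert_subset ?_ (Set.range_subset_iff.2 ?_))) d
  · exact ⟨1, by simp [MvPolynomial.mem_restrictTotalDegree], map_one (MvPolynomial.aeval _)⟩
  · exact fun i => ⟨.X i, by simp [MvPolynomial.mem_restrictTotalDegree], MvPolynomial.aeval_X _ i⟩

lemma evalBool_eq_aeval (P : MvPolynomial ι ℝ) (a : ι → Bool) :
    evalBool a P = MvPolynomial.aeval (fun i (a : ι → Bool) => bit (a i)) P a := by
  simp [evalBool, MvPolynomial.aeval_def, MvPolynomial.eval_eq, MvPolynomial.eval₂_eq, bit,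
    Algebra.algebraMap_eq_smul_one]

lemma mem_degLE_iff {d : ℕ} {F : (ι → Bool) → ℝ} :
    F ∈ degLE ι d ↔ ∃ P : MvPolynomial ι ℝ, P.totalDegree ≤ d ∧ ∀ a, evalBool a P = F a := by
  constructor
  · intro hF
    obtain ⟨P, hP, rfl⟩ := degLE_le_map_restrictTotalDegree d hF
    exact ⟨P, (MvPolynomial.mem_restrictTotalDegree _ _ _).1 hP, evalBool_eq_aeval P⟩
  · rintro ⟨P, hP, hPF⟩
    have hF : F = ∑ m ∈ P.support, P.coeff m • ∏ i ∈ m.support, (fun a => bit (a i)) ^ m i := by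
      funext a
      simp [← hPF, evalBool, MvPolynomial.eval_eq, bit]
    rw [hF]
    refine sum_mem fun m hm => Submodule.smul_mem _ _ ?_
    refine degLE_mono ((MvPolynomial.le_totalDegree hm).trans hP) (prod_mem_degLE _ fun i _ => ?_)
    simpa using pow_mem_degLE (bit_mem_degLE i) (m i)

end CubeFunctions

section FiniteProbability

variable {Ω κ : Type*} [MeasurableSpace Ω] [Fintype κ]

lemma exists_level {ρ : ℝ} {Q : ℕ} (h : 1 / 4 ≤ 2 ^ Q * ρ) :
    ∃ q ≤ Q, 1 / 4 ≤ 2 ^ q * ρ ∧ (2 ^ q * ρ ≤ 1 / 2 ∨ q = 0) := by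
  have hex : ∃ q, 1 / 4 ≤ 2 ^ q * ρ := ⟨Q, h⟩
  refine ⟨Nat.find hex, Nat.find_le h, Nat.find_spec hex, ?_⟩
  rcases hq : Nat.find hex with _ | q
  · exact .inr rfl
  · have := Nat.find_min hex (m := q) (by omega)
    rw [not_le] at this
    exact .inl (by rw [pow_succ]; linarith)

lemma uniformOn_univ_real {α : Type*} [Fintype α] [MeasurableSpace α] [MeasurableSingletonClass α]
    (p : α → Prop) [DecidablePred p] :
    (ProbabilityTheory.uniformOn Set.univ).real {a | p a} = #{a | p a} / Fintype.card α := by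
  rw [measureReal_def, ProbabilityTheory.uniformOn_univ, ENNReal.toReal_div,
    Measure.count_apply_finite _ (Set.toFinite _)]
  simp

lemma pi_real_forall_mem (μ : Measure Ω) [IsProbabilityMeasure μ] (E : Set Ω) :
    (Measure.pi fun _ : κ => μ).real {ω | ∀ k, ω k ∈ E} = μ.real E ^ Fintype.card κ := by
  have hpi : {ω : κ → Ω | ∀ k, ω k ∈ E} = Set.univ.pi fun _ => E := by
    ext ω
    simp
  simp [hpi, measureReal_def]

variable [DiscreteMeasurableSpace Ω]

lemma pi_real_exists_mem_le (μ : Measure Ω) [IsProbabilityMeasure μ] (E : Set Ω) :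
    (Measure.pi fun _ : κ => μ).real {ω | ∃ k, ω k ∈ E} ≤ Fintype.card κ * μ.real E := by
  have hunion : {ω : κ → Ω | ∃ k, ω k ∈ E} = ⋃ k, Function.eval k ⁻¹' E := by
    ext ω
    simp
  calc _ ≤ ∑ k : κ, (Measure.pi fun _ : κ => μ).real (Function.eval k ⁻¹' E) :=
        hunion ▸ measureReal_iUnion_fintype_le _
    _ = Fintype.card κ * μ.real E := by
        simp [(measurePreserving_eval (fun _ : κ => μ) _).measureReal_preimage
          (MeasurableSet.of_discrete (s := E)).nullMeasurableSet]

variable [Finite Ω]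

lemma pi_real_card_ge_mul_two_pow_le (μ : Measure Ω) [IsProbabilityMeasure μ] (E : Set Ω) (r : ℕ) :
    (Measure.pi fun _ : κ => μ).real {ω | r ≤ #{j | ω j ∈ E}} * 2 ^ r ≤
      (1 + μ.real E) ^ Fintype.card κ := by
  let Y (ω : κ → Ω) : ℝ := ∏ j, (1 + E.indicator 1 (ω j))
  have hY (ω : κ → Ω) : Y ω = 2 ^ #{j | ω j ∈ E} := by
    simp only [Y, Set.indicator_apply, Pi.one_apply, add_ite, add_zero, one_add_one_eq_two]
    rw [prod_ite, prod_const, prod_const_one, mul_one]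
  have hsub : {ω : κ → Ω | r ≤ #{j | ω j ∈ E}} ⊆ {ω | 2 ^ r ≤ Y ω} := fun ω hω => by
    simpa only [hY, Set.mem_ofPred_eq] using pow_le_pow_right₀ (one_le_two (α := ℝ)) hω
  calc (Measure.pi fun _ : κ => μ).real {ω | r ≤ #{j | ω j ∈ E}} * 2 ^ r
      ≤ 2 ^ r * (Measure.pi fun _ : κ => μ).real {ω | 2 ^ r ≤ Y ω} := by
        rw [mul_comm]
        exact mul_le_mul_of_nonneg_left (measureReal_mono hsub) (by positivity)
    _ ≤ ∫ ω, Y ω ∂Measure.pi fun _ => μ :=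
        mul_meas_ge_le_integral_of_nonneg
          (.of_forall fun ω => (hY ω).symm ▸ by positivity) .of_finite _
    _ = (1 + μ.real E) ^ Fintype.card κ := by
        rw [integral_fintype_prod_eq_pow (fun x => 1 + E.indicator (1 : Ω → ℝ) x),
          integral_add .of_finite .of_finite, integral_indicator_one .of_discrete]
        simp

lemma pi_real_existsUnique (μ : Measure Ω) [IsProbabilityMeasure μ] (X : Finset κ) (E : Set Ω) :
    (Measure.pi fun _ : κ => μ).real {ω | ∃! k, k ∈ X ∧ ω k ∈ E} =
      #X * (μ.real E * (1 - μ.real E) ^ (#X - 1)) := by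
  let R (k : κ) : Set (κ → Ω) := (X : Set κ).pi fun j => if j = k then E else Eᶜ
  have hR (k : κ) (hk : k ∈ X) :
      (Measure.pi fun _ : κ => μ).real (R k) = μ.real E * (1 - μ.real E) ^ (#X - 1) := by
    rw [measureReal_def, Measure.pi_pi_finset, ENNReal.toReal_prod, ← mul_prod_erase X _ hk,
      ← card_erase_of_mem hk, ← prod_const, ← probReal_compl_eq_one_sub .of_discrete, if_pos rfl]
    exact congrArg _ (prod_congr rfl fun j hj => by rw [if_neg (ne_of_mem_erase hj)]; rfl)
  have hdisj : (X : Set κ).PairwiseDisjoint R := fun k hk k' _ hkk' =>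
    Set.disjoint_left.2 fun ω hω hω' => by
      have h1 := hω k hk
      have h2 := hω' k hk
      simp_all
  have hunion : {ω : κ → Ω | ∃! k, k ∈ X ∧ ω k ∈ E} = ⋃ k ∈ X, R k := by
    ext ω
    simp only [Set.mem_ofPred_eq, Set.mem_iUnion₂, R, Set.mem_pi, mem_coe]
    refine exists_congr fun k => ⟨fun ⟨⟨hk, hkE⟩, huniq⟩ => ⟨hk, fun j hj => ?_⟩,
      fun ⟨hk, h⟩ => ⟨⟨hk, by simpa using h k hk⟩, fun j ⟨hj, hjE⟩ => ?_⟩⟩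
    · split_ifs with hjk
      · exact hjk ▸ hkE
      · exact fun hjE => hjk (huniq j ⟨hj, hjE⟩)
    · by_contra hjk
      have hjR := h j hj
      rw [if_neg hjk] at hjR
      exact hjR hjE
  rw [hunion, measureReal_biUnion_finset hdisj fun _ _ => .of_discrete, sum_congr rfl hR, sum_const,
    nsmul_eq_mul]

lemma one_div_eight_le_pi_real_existsUnique (μ : Measure Ω) [IsProbabilityMeasure μ] {X : Finset κ}
    {E : Set Ω} (hlow : 1 / 4 ≤ #X * μ.real E) (hhigh : #X * μ.real E ≤ 1 / 2 ∨ #X = 1) :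
    1 / 8 ≤ (Measure.pi fun _ : κ => μ).real {ω | ∃! k, k ∈ X ∧ ω k ∈ E} := by
  rw [pi_real_existsUnique, ← mul_assoc]
  obtain hhigh | hX := hhigh
  · have hle : μ.real E ≤ 1 := measureReal_le_one
    have hbernoulli : 1 - #X * μ.real E ≤ (1 - μ.real E) ^ (#X - 1) :=
      calc 1 - #X * μ.real E ≤ 1 + ((#X - 1 : ℕ) : ℝ) * -μ.real E := by
            have : ((#X - 1 : ℕ) : ℝ) ≤ #X := by exact_mod_cast Nat.sub_le _ 1
            nlinarith [measureReal_nonneg (μ := μ) (s := E)]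
        _ ≤ (1 - μ.real E) ^ (#X - 1) := one_add_mul_le_pow (by linarith) _
    calc (1 / 8 : ℝ) ≤ 1 / 4 * (1 / 2) := by norm_num
      _ ≤ _ := mul_le_mul hlow (by linarith) (by norm_num) (by positivity)
  · simp only [hX, Nat.cast_one, one_mul, tsub_self, pow_zero, mul_one] at hlow ⊢
    linarith

lemma prod_real_le_mul {Ω' : Type*} [Finite Ω'] [MeasurableSpace Ω'] [DiscreteMeasurableSpace Ω']
    (μ : Measure Ω) [IsFiniteMeasure μ] (ν : Measure Ω') [IsFiniteMeasure ν] {E : Set (Ω × Ω')}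
    {A : Set Ω} {δ : ℝ} (hE : ∀ x, ν.real (Prod.mk x ⁻¹' E) ≤ A.indicator (fun _ => δ) x) :
    (μ.prod ν).real E ≤ μ.real A * δ :=
  calc (μ.prod ν).real E = ∫ x, ν.real (Prod.mk x ⁻¹' E) ∂μ := by
        rw [measureReal_def, Measure.prod_apply .of_discrete]
        exact (integral_toReal Measurable.of_discrete.aemeasurable
          (.of_forall fun _ => measure_lt_top ν _)).symm
    _ ≤ ∫ x, A.indicator (fun _ => δ) x ∂μ := integral_mono .of_finite .of_finite hE
    _ = μ.real A * δ := integral_indicator_const δ .of_discrete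

end FiniteProbability

section RandomRep

variable {ι κ : Type} {f : (ι → Bool) → Bool} {ε ε' : ℝ} {d d' : ℕ}

/-- An `ε`-error probabilistic polynomial of degree `d` for `f`, presented by an arbitrary finite
probability space instead of the list of weights of `HasProbPoly`. -/
def HasRandomRep (f : (ι → Bool) → Bool) (ε : ℝ) (d : ℕ) : Prop :=
  ∃ (Ω : Type) (_ : Finite Ω) (_ : MeasurableSpace Ω) (_ : DiscreteMeasurableSpace Ω)
    (μ : Measure Ω) (_ : IsProbabilityMeasure μ) (F : Ω → (ι → Bool) → ℝ),
    (∀ ω, F ω ∈ degLE ι d) ∧ ∀ a, μ.real {ω | F ω a ≠ bit (f a)} ≤ ε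

lemma hasRandomRep_of_hasProbPoly (h : HasProbPoly f ε d) : HasRandomRep f ε d := by
  obtain ⟨k, w, P, hw0, hw1, hP, hε⟩ := h
  let μ : Measure (Fin k) := ∑ i, ENNReal.ofReal (w i) • Measure.dirac i
  have hμ (E : Set (Fin k)) : μ.real E = ∑ i with i ∈ E, w i := by
    simp only [μ, Measure.real, Measure.coe_finsetSum, Finset.sum_apply, Measure.smul_apply,
      smul_eq_mul, Measure.dirac_apply]
    rw [ENNReal.toReal_sum fun i _ => by by_cases hi : i ∈ E <;> simp [hi], sum_filter]
    refine sum_congr rfl fun i _ => ?_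
    by_cases hi : i ∈ E <;> simp [hi, hw0 i]
  have hprob : IsProbabilityMeasure μ := by
    refine ⟨?_⟩
    rw [← ENNReal.toReal_eq_one_iff]
    simpa [hw1, Measure.real] using hμ Set.univ
  refine ⟨Fin k, inferInstance, inferInstance, inferInstance, μ, hprob,
    fun i a => evalBool a (P i), fun i => mem_degLE_iff.2 ⟨P i, hP i, fun _ => rfl⟩, fun a => ?_⟩
  simpa only [hμ, Set.mem_ofPred_eq, bit] using hε a

lemma HasRandomRep.hasProbPoly (h : HasRandomRep f ε d) : HasProbPoly f ε d := by
  obtain ⟨Ω, _, _, _, μ, _, F, hF, hε⟩ := h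
  choose P hPd hPF using fun ω => mem_degLE_iff.1 (hF ω)
  cases nonempty_fintype Ω
  let e := Fintype.equivFin Ω
  refine ⟨Fintype.card Ω, fun i => μ.real {e.symm i}, fun i => P (e.symm i),
    fun _ => measureReal_nonneg, ?_, fun i => hPd _, fun a => le_trans (le_of_eq ?_) (hε a)⟩
  · rw [e.symm.sum_comp fun ω => μ.real {ω}, sum_measureReal_singleton, coe_univ, probReal_univ]
  · rw [sum_filter, e.symm.sum_comp fun ω =>
      if evalBool a (P ω) ≠ if f a then 1 else 0 then μ.real {ω} else 0, ← sum_filter,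
      sum_measureReal_singleton]
    simp [hPF, bit]

lemma HasRandomRep.mono (h : HasRandomRep f ε d) (hε : ε ≤ ε') (hd : d ≤ d') :
    HasRandomRep f ε' d' := by
  obtain ⟨Ω, _, _, _, μ, _, F, hF, hμ⟩ := h
  exact ⟨Ω, ‹_›, ‹_›, ‹_›, μ, ‹_›, F, fun ω => degLE_mono hd (hF ω), fun a => (hμ a).trans hε⟩

lemma HasRandomRep.comp (h : HasRandomRep f ε d) {y : (κ → Bool) → ι → Bool}
    (hy : ∀ i, (fun a => bit (y a i)) ∈ degLE κ 1) : HasRandomRep (f ∘ y) ε d := by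
  obtain ⟨Ω, _, _, _, μ, _, F, hF, hμ⟩ := h
  exact ⟨Ω, ‹_›, ‹_›, ‹_›, μ, ‹_›, fun ω => F ω ∘ y, fun ω => comp_mem_degLE (hF ω) hy,
    fun a => hμ (y a)⟩

lemma HasRandomRep.not (h : HasRandomRep f ε d) : HasRandomRep (fun a => !f a) ε d := by
  obtain ⟨Ω, _, _, _, μ, _, F, hF, hμ⟩ := h
  refine ⟨Ω, ‹_›, ‹_›, ‹_›, μ, ‹_›, fun ω => 1 - F ω, fun ω => sub_mem (one_mem_degLE d) (hF ω),
    fun a => ?_⟩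
  simpa using hμ a

lemma hasRandomRep_pdeg [Finite ι] (f : (ι → Bool) → Bool) (hε : 0 ≤ ε) :
    HasRandomRep f ε (pdeg ε f) := by
  obtain ⟨d, hd⟩ := exists_mem_degLE fun a => bit (f a)
  have h : HasRandomRep f ε d :=
    ⟨Unit, inferInstance, inferInstance, inferInstance, .dirac (), inferInstance,
      fun _ a => bit (f a), fun _ => hd, fun a => by simpa using hε⟩
  exact hasRandomRep_of_hasProbPoly (Nat.sInf_mem (s := {d | HasProbPoly f ε d}) ⟨d, h.hasProbPoly⟩)

lemma HasRandomRep.pdeg_le (h : HasRandomRep f ε d) : pdeg ε f ≤ d := Nat.sInf_le h.hasProbPoly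

/-- The multilinear majority polynomial, with ties counted as `true`. -/
noncomputable def majority [Fintype κ] (v : κ → ℝ) : ℝ :=
  ∑ B : Finset κ with Fintype.card κ ≤ 2 * #B, (∏ j ∈ B, v j) * ∏ j ∈ Bᶜ, (1 - v j)

lemma majority_eq_bit [Fintype κ] {v : κ → ℝ} {b : Bool}
    (h : 2 * #{j | v j ≠ bit b} < Fintype.card κ) : majority v = bit b := by
  have exists_good (B : Finset κ) (hB : Fintype.card κ ≤ 2 * #B) : ∃ j ∈ B, v j = bit b := by
    obtain ⟨j, hjB, hj⟩ := exists_mem_notMem_of_card_lt_card (s := {j | v j ≠ bit b}) (t := B)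
      (by omega)
    exact ⟨j, hjB, by simpa using hj⟩
  cases b
  · refine sum_eq_zero fun B hB => ?_
    obtain ⟨j, hjB, hj⟩ := exists_good B (mem_filter.1 hB).2
    rw [prod_eq_zero hjB hj, zero_mul]
  · have hone : ∑ B : Finset κ, (∏ j ∈ B, v j) * ∏ j ∈ Bᶜ, (1 - v j) = 1 := by
      simpa [compl_eq_univ_sdiff] using (prod_add v (fun j => 1 - v j) univ).symm
    rw [bit_true, ← hone]
    refine sum_subset (subset_univ _) fun B _ hB => ?_
    obtain ⟨j, hjB, hj⟩ := exists_good Bᶜ (by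
      have := card_compl_add_card B
      simp only [mem_filter_univ] at hB
      omega)
    rw [prod_eq_zero hjB (by simp [hj]), mul_zero]

lemma majority_mem_degLE [Fintype κ] {F : κ → (ι → Bool) → ℝ} (hF : ∀ j, F j ∈ degLE ι d) :
    (fun a => majority fun j => F j a) ∈ degLE ι (Fintype.card κ * d) := by
  have h : (fun a => majority fun j => F j a) =
      ∑ B : Finset κ with Fintype.card κ ≤ 2 * #B, (∏ j ∈ B, F j) * ∏ j ∈ Bᶜ, (1 - F j) := by
    funext a
    simp [majority]
  rw [h]
  refine sum_mem fun B _ => ?_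
  rw [← card_add_card_compl B, add_mul]
  refine mul_mem_degLE ?_ ?_
  · simpa using prod_mem_degLE B fun j _ => hF j
  · simpa using prod_mem_degLE Bᶜ fun j _ => sub_mem (one_mem_degLE d) (hF j)

lemma HasRandomRep.amplify (h : HasRandomRep f (1 / 3) d) (r : ℕ) :
    HasRandomRep f ((8 / 9) ^ r) (2 * r * d) := by
  obtain ⟨Ω, _, _, _, μ, _, F, hF, hμ⟩ := h
  refine ⟨Fin (2 * r) → Ω, inferInstance, inferInstance, inferInstance, .pi fun _ => μ,
    inferInstance, fun ω a => majority fun j => F (ω j) a, fun ω => ?_, fun a => ?_⟩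
  · simpa using majority_mem_degLE fun j => hF (ω j)
  have htail := pi_real_card_ge_mul_two_pow_le (κ := Fin (2 * r)) μ {o | F o a ≠ bit (f a)} r
  have hnum : (1 + μ.real {o | F o a ≠ bit (f a)}) ^ Fintype.card (Fin (2 * r)) ≤
      (8 / 9) ^ r * 2 ^ r := by
    rw [← mul_pow, Fintype.card_fin, pow_mul]
    refine pow_le_pow_left₀ (by positivity) ?_ r
    calc _ ≤ (1 + 1 / 3 : ℝ) ^ 2 := pow_le_pow_left₀ (by positivity) (by linarith [hμ a]) 2
      _ = 8 / 9 * 2 := by norm_num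
  refine (measureReal_mono fun ω hω => ?_).trans
    (le_of_mul_le_mul_right (htail.trans hnum) (by positivity))
  by_contra hr
  refine hω (majority_eq_bit ?_)
  simp only [Set.mem_ofPred_eq, not_le] at hr
  simpa using hr

end RandomRep

section ORLike

variable {κ : Type} {g : (κ → Bool) → Bool}

/-- `g` agrees with OR on all inputs of Hamming weight at most one. -/
def IsORLike (g : (κ → Bool) → Bool) : Prop :=
  g (fun _ => false) = false ∧ ∀ i, g (fun l => decide (l = i)) = true

lemma IsORLike.apply_of_existsUnique (hg : IsORLike g) {x : κ → Bool} (hx : ∃! l, x l = true) :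
    g x = true := by
  obtain ⟨i, hi, huniq⟩ := hx
  rw [← hg.2 i]
  refine congrArg g (funext fun l => Bool.eq_iff_iff.2 ?_)
  simp only [decide_eq_true_eq]
  exact ⟨huniq l, fun h => h ▸ hi⟩

/-- The seed of a random restriction: a uniform level `j ≤ K` and independent uniform labels in
`Fin (2 ^ K)`; the coordinates that survive are those with label below `2 ^ j`. -/
noncomputable def restrictionSeed (κ : Type) [Fintype κ] (K : ℕ) :
    Measure (Fin (K + 1) × (κ → Fin (2 ^ K))) :=
  (ProbabilityTheory.uniformOn Set.univ).prod (.pi fun _ => ProbabilityTheory.uniformOn Set.univ)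

instance [Fintype κ] (K : ℕ) : IsProbabilityMeasure (restrictionSeed κ K) := by
  unfold restrictionSeed
  infer_instance

/-- The input `x` with the coordinates killed by the seed `ω` set to `false`. -/
def restrict {K : ℕ} (ω : Fin (K + 1) × (κ → Fin (2 ^ K))) (x : κ → Bool) : κ → Bool :=
  fun l => x l && decide ((ω.2 l : ℕ) < 2 ^ (ω.1 : ℕ))

lemma bit_restrict_mem_degLE {K : ℕ} (ω : Fin (K + 1) × (κ → Fin (2 ^ K))) (l : κ) :
    (fun x => bit (restrict ω x l)) ∈ degLE κ 1 := by
  by_cases h : (ω.2 l : ℕ) < 2 ^ (ω.1 : ℕ)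
  · simpa [restrict, h] using bit_mem_degLE l
  · simpa [restrict, h] using const_mem_degLE 1 0

lemma IsORLike.le_restrictionSeed_real [Fintype κ] (hg : IsORLike g) {K : ℕ}
    (hK : 2 * Fintype.card κ ≤ 2 ^ K) {x : κ → Bool} (hx : ∃ l, x l = true) :
    1 / (8 * ((K : ℝ) + 1)) ≤ (restrictionSeed κ K).real {ω | g (restrict ω x) = true} := by
  let X : Finset κ := {l | x l = true}
  have hX : (1 : ℝ) ≤ #X := by
    exact_mod_cast card_pos.2 (hx.imp fun l hl => by simpa [X] using hl)
  have hXK : 2 * (#X : ℝ) ≤ 2 ^ K := by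
    exact_mod_cast (Nat.mul_le_mul_left 2 X.card_le_univ).trans hK
  have h2K : (0 : ℝ) < 2 ^ K := by positivity
  obtain ⟨j, hjK, hlow, hhigh⟩ := exists_level (ρ := #X / 2 ^ K) (Q := K)
    (by rw [mul_div_cancel₀ _ h2K.ne']; linarith)
  let E : Set (Fin (2 ^ K)) := {u | (u : ℕ) < 2 ^ j}
  have hE : #X * (ProbabilityTheory.uniformOn Set.univ).real E = 2 ^ j * (#X / 2 ^ K) := by
    rw [uniformOn_univ_real, Fin.card_filter_val_lt, Fintype.card_fin,
      min_eq_right (Nat.pow_le_pow_right two_pos hjK)]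
    push_cast
    ring
  have hhigh' : 2 ^ j * (#X / 2 ^ K) ≤ (1 / 2 : ℝ) := hhigh.elim id fun hj => by
    rw [hj, pow_zero, one_mul, div_le_iff₀ h2K]
    linarith
  have hlevel : (ProbabilityTheory.uniformOn Set.univ).real
      {i | i = (⟨j, Nat.lt_succ_of_le hjK⟩ : Fin (K + 1))} = 1 / ((K : ℝ) + 1) := by
    rw [uniformOn_univ_real, filter_eq' univ, if_pos (mem_univ _)]
    simp
  rw [← hE] at hlow hhigh'
  calc 1 / (8 * ((K : ℝ) + 1)) = 1 / ((K : ℝ) + 1) * (1 / 8) := by field_simp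
    _ ≤ 1 / ((K : ℝ) + 1) * _ := mul_le_mul_of_nonneg_left
        (one_div_eight_le_pi_real_existsUnique _ hlow (.inl hhigh')) (by positivity)
    _ = (restrictionSeed κ K).real
          ({i | i = ⟨j, Nat.lt_succ_of_le hjK⟩} ×ˢ {U | ∃! l, l ∈ X ∧ U l ∈ E}) := by
        rw [restrictionSeed, measureReal_prod_prod, hlevel]
    _ ≤ _ := measureReal_mono fun ω ⟨hω, hU⟩ => hg.apply_of_existsUnique (by
        rw [Set.mem_ofPred_eq] at hω
        simpa [restrict, X, E, hω] using hU)

end ORLike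

section Isolation

/-- On each scale `q ≤ Q` the `2 ^ q` values of `v` are added up, and the resulting numbers are
combined by the polynomial computing OR. The value is `1` as soon as `v` is the indicator of a
single element on some scale. -/
noncomputable def isolate (Q : ℕ) (v : (Σ q : Fin (Q + 1), Fin (2 ^ (q : ℕ))) → ℝ) : ℝ :=
  1 - ∏ q, (1 - ∑ i, v ⟨q, i⟩)

lemma isolate_eq_zero {Q : ℕ} {v : (Σ q : Fin (Q + 1), Fin (2 ^ (q : ℕ))) → ℝ}
    (hv : ∀ k, v k = 0) : isolate Q v = 0 := by
  simp [isolate, hv]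

lemma isolate_eq_one {Q : ℕ} {v : (Σ q : Fin (Q + 1), Fin (2 ^ (q : ℕ))) → ℝ} (q : Fin (Q + 1))
    (hv : ∑ i, v ⟨q, i⟩ = 1) : isolate Q v = 1 := by
  rw [isolate, prod_eq_zero (mem_univ q) (by rw [hv, sub_self]), sub_zero]

lemma isolate_mem_degLE {ι : Type} {Q D : ℕ}
    {F : (Σ q : Fin (Q + 1), Fin (2 ^ (q : ℕ))) → (ι → Bool) → ℝ} (hF : ∀ k, F k ∈ degLE ι D) :
    (fun a => isolate Q fun k => F k a) ∈ degLE ι ((Q + 1) * D) := by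
  have h : (fun a => isolate Q fun k => F k a) = 1 - ∏ q, (1 - ∑ i, F ⟨q, i⟩) := by
    funext a
    simp [isolate]
  rw [h]
  refine sub_mem (one_mem_degLE _) ?_
  simpa using prod_mem_degLE univ fun q _ =>
    sub_mem (one_mem_degLE D) (sum_mem fun i _ => hF ⟨q, i⟩)

lemma card_sigma_fin_two_pow_le (Q : ℕ) :
    Fintype.card (Σ q : Fin (Q + 1), Fin (2 ^ (q : ℕ))) ≤ 2 ^ (Q + 1) := by
  simp [Fin.sum_univ_eq_sum_range fun q => 2 ^ q, Nat.geomSum_eq]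

variable {Ω : Type*} [MeasurableSpace Ω] [DiscreteMeasurableSpace Ω] {μ : Measure Ω}
  [IsProbabilityMeasure μ] {V : Ω → ℝ} {b : Ω → Bool} {Q : ℕ} {δ : ℝ}

lemma pi_real_exists_ne_bit_le (hV : μ.real {ω | V ω ≠ bit (b ω)} ≤ δ)
    (hδ : 2 ^ (Q + 1) * δ ≤ 1 / 40) :
    (Measure.pi fun _ : (Σ q : Fin (Q + 1), Fin (2 ^ (q : ℕ))) => μ).real
      {ω | ∃ k, V (ω k) ≠ bit (b (ω k))} ≤ 1 / 40 := by
  refine (pi_real_exists_mem_le μ {ω | V ω ≠ bit (b ω)}).trans (le_trans ?_ hδ)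
  have hcard : (Fintype.card (Σ q : Fin (Q + 1), Fin (2 ^ (q : ℕ))) : ℝ) ≤ 2 ^ (Q + 1) := by
    exact_mod_cast card_sigma_fin_two_pow_le Q
  exact mul_le_mul hcard hV measureReal_nonneg (by positivity)

lemma pi_real_isolate_ne_zero_le (hV : μ.real {ω | V ω ≠ bit (b ω)} ≤ δ)
    (hδ : 2 ^ (Q + 1) * δ ≤ 1 / 40) (hb : ∀ ω, b ω = false) :
    (Measure.pi fun _ : (Σ q : Fin (Q + 1), Fin (2 ^ (q : ℕ))) => μ).real
      {ω | isolate Q (fun k => V (ω k)) ≠ 0} ≤ 1 / 40 := by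
  refine (measureReal_mono fun ω hω => ?_).trans (pi_real_exists_ne_bit_le hV hδ)
  by_contra hgood
  simp only [Set.mem_ofPred_eq, not_exists, not_not] at hgood
  exact hω (isolate_eq_zero fun k => by rw [hgood, hb, bit_false])

variable [Finite Ω]

lemma pi_real_isolate_ne_one_le (hV : μ.real {ω | V ω ≠ bit (b ω)} ≤ δ)
    (hδ : 2 ^ (Q + 1) * δ ≤ 1 / 40) (hb : 1 / 4 ≤ 2 ^ Q * μ.real {ω | b ω = true}) :
    (Measure.pi fun _ : (Σ q : Fin (Q + 1), Fin (2 ^ (q : ℕ))) => μ).real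
      {ω | isolate Q (fun k => V (ω k)) ≠ 1} ≤ 9 / 10 := by
  obtain ⟨q, hq, hlow, hhigh⟩ := exists_level hb
  let q' : Fin (Q + 1) := ⟨q, Nat.lt_succ_of_le hq⟩
  let X : Finset (Σ q : Fin (Q + 1), Fin (2 ^ (q : ℕ))) := univ.map (.sigmaMk q')
  have hX : #X = 2 ^ q := by simp [X, q']
  have hunique := one_div_eight_le_pi_real_existsUnique μ (X := X) (E := {ω | b ω = true})
    (by rw [hX]; exact_mod_cast hlow)
    (by rw [hX]; exact hhigh.imp (by exact_mod_cast id) (by rintro rfl; rfl))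
  have hsub : {ω : (Σ q : Fin (Q + 1), Fin (2 ^ (q : ℕ))) → Ω | isolate Q (fun k => V (ω k)) ≠ 1} ⊆
      {ω | ∃ k, V (ω k) ≠ bit (b (ω k))} ∪ {ω | ∃! k, k ∈ X ∧ ω k ∈ {ω | b ω = true}}ᶜ := by
    intro ω hω
    by_contra hgood
    simp only [Set.mem_union, Set.mem_compl_iff, not_or, not_not, Set.mem_ofPred_eq,
      not_exists] at hgood
    obtain ⟨hV, k, ⟨hkX, hk⟩, huniq⟩ := hgood
    obtain ⟨i, -, rfl⟩ := mem_map.1 hkX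
    refine hω (isolate_eq_one q' ?_)
    rw [sum_eq_single_of_mem i (mem_univ i)]
    · exact (hV _).trans (congrArg bit hk)
    · intro i' _ hi'
      rw [hV, bit_eq_zero]
      by_contra htrue
      have := huniq ⟨q', i'⟩ ⟨mem_map_of_mem _ (mem_univ i'), by simpa using htrue⟩
      simp_all
  refine (measureReal_mono hsub).trans ((measureReal_union_le _ _).trans ?_)
  rw [probReal_compl_eq_one_sub .of_discrete]
  linarith [pi_real_exists_ne_bit_le hV hδ]

end Isolation

lemma hasRandomRep_of_one_sided {ι Ω : Type} [Finite Ω] [MeasurableSpace Ω]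
    [DiscreteMeasurableSpace Ω] (μ : Measure Ω) [IsProbabilityMeasure μ] {f : (ι → Bool) → Bool}
    {D : ℕ} {U : Ω → (ι → Bool) → ℝ} (hU : ∀ ω, U ω ∈ degLE ι D)
    (h0 : ∀ a, f a = false → μ.real {ω | U ω a ≠ 0} ≤ 1 / 40)
    (h1 : ∀ a, f a = true → μ.real {ω | U ω a ≠ 1} ≤ 9 / 10) : HasRandomRep f (1 / 3) (11 * D) := by
  refine ⟨Fin 11 → Ω, inferInstance, inferInstance, inferInstance, .pi fun _ => μ, inferInstance,
    fun ω => 1 - ∏ j, (1 - U (ω j)), fun ω => sub_mem (one_mem_degLE _) ?_, fun a => ?_⟩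
  · simpa using prod_mem_degLE univ fun j _ => sub_mem (one_mem_degLE D) (hU (ω j))
  · cases ha : f a
    · have hsub : {ω : Fin 11 → Ω | (1 - ∏ j, (1 - U (ω j))) a ≠ bit false} ⊆
          {ω | ∃ j, ω j ∈ {ω | U ω a ≠ 0}} := fun ω hω => by
        by_contra hgood
        simp only [Set.mem_ofPred_eq, not_exists, not_not] at hgood
        simp [hgood] at hω
      refine (measureReal_mono hsub).trans ((pi_real_exists_mem_le μ _).trans ?_)
      rw [Fintype.card_fin]
      push_cast
      linarith [h0 a ha]
    · have hsub : {ω : Fin 11 → Ω | (1 - ∏ j, (1 - U (ω j))) a ≠ bit true} ⊆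
          {ω | ∀ j, ω j ∈ {ω | U ω a ≠ 1}} := fun ω hω j hj => by
        simp only [Set.mem_ofPred_eq, Pi.sub_apply, Finset.prod_apply] at hω
        rw [prod_eq_zero (mem_univ j) (by simp [hj])] at hω
        simp at hω
      refine (measureReal_mono hsub).trans ?_
      rw [pi_real_forall_mem, Fintype.card_fin]
      exact (pow_le_pow_left₀ measureReal_nonneg (h1 a ha) 11).trans (by norm_num)

lemma two_pow_mul_eight_ninths_pow_le (Q : ℕ) :
    (2 : ℝ) ^ (Q + 1) * (8 / 9) ^ (6 * Q + 40) ≤ 1 / 40 :=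
  calc (2 : ℝ) ^ (Q + 1) * (8 / 9) ^ (6 * Q + 40)
      = (2 * (8 / 9) ^ 6) ^ Q * (2 * (8 / 9) ^ 40) := by
        rw [pow_succ, pow_add, pow_mul, mul_pow]
        ring
    _ ≤ 1 ^ Q * (1 / 40) := by
        gcongr
        · norm_num
        · norm_num
    _ = 1 / 40 := by simp

lemma IsORLike.hasRandomRep_or {κ : Type} [Fintype κ] {g : (κ → Bool) → Bool} (hg : IsORLike g)
    {d K Q : ℕ} (h : HasRandomRep g (1 / 3) d) (hK : 2 * Fintype.card κ ≤ 2 ^ K)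
    (hQ : 2 * (K + 1) ≤ 2 ^ Q) :
    HasRandomRep (fun x : κ → Bool => decide (∃ l, x l = true)) (1 / 3)
      (11 * ((Q + 1) * (2 * (6 * Q + 40) * d))) := by
  obtain ⟨Ω, _, _, _, μ, _, F, hF, hμ⟩ := h.amplify (6 * Q + 40)
  let b (x : κ → Bool) (ω : (Fin (K + 1) × (κ → Fin (2 ^ K))) × Ω) : Bool := g (restrict ω.1 x)
  let V (x : κ → Bool) (ω : (Fin (K + 1) × (κ → Fin (2 ^ K))) × Ω) : ℝ := F ω.2 (restrict ω.1 x)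
  have hV (x : κ → Bool) : ((restrictionSeed κ K).prod μ).real {ω | V x ω ≠ bit (b x ω)} ≤
      (8 / 9) ^ (6 * Q + 40) :=
    (prod_real_le_mul _ μ (A := Set.univ) fun σ => by simpa using hμ (restrict σ x)).trans_eq
      (by simp)
  have hb (x : κ → Bool) (hx : ∃ l, x l = true) :
      1 / 4 ≤ 2 ^ Q * ((restrictionSeed κ K).prod μ).real {ω | b x ω = true} := by
    have hfst : {ω | b x ω = true} = {σ | g (restrict σ x) = true} ×ˢ (Set.univ : Set Ω) := by
      ext
      simp [b]
    have hQ' : 2 * ((K : ℝ) + 1) ≤ 2 ^ Q := by exact_mod_cast hQ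
    rw [hfst, measureReal_prod_prod, probReal_univ, mul_one]
    calc (1 / 4 : ℝ) = 2 * ((K : ℝ) + 1) * (1 / (8 * ((K : ℝ) + 1))) := by field_simp; norm_num
      _ ≤ _ := mul_le_mul hQ' (hg.le_restrictionSeed_real hK hx) (by positivity) (by positivity)
  refine hasRandomRep_of_one_sided (.pi fun _ => (restrictionSeed κ K).prod μ)
    (U := fun ω x => isolate Q fun k => V x (ω k)) (fun ω => isolate_mem_degLE fun k =>
      comp_mem_degLE (hF (ω k).2) (bit_restrict_mem_degLE (ω k).1)) (fun x hx => ?_) fun x hx => ?_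
  · refine pi_real_isolate_ne_zero_le (b := b x) (hV x) (two_pow_mul_eight_ninths_pow_le Q)
      fun ω => hg.1 ▸ congrArg g (funext fun l => ?_)
    simp only [decide_eq_false_iff_not, not_exists, Bool.not_eq_true] at hx
    simp [restrict, hx l]
  · exact pi_real_isolate_ne_one_le (hV x) (two_pow_mul_eight_ninths_pow_le Q)
      (hb x (of_decide_eq_true hx))

section Sensitivity

variable {ι : Type}

/-- The point `a` with its `i`-th bit flipped. -/
noncomputable def flipAt (a : ι → Bool) (i : ι) : ι → Bool := Function.update a i (!a i)

/-- The point obtained from `a` by flipping those coordinates in `S` at which `x` is `true`. -/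
noncomputable def flipOn (a : ι → Bool) (S : Finset ι) (x : S → Bool) (i : ι) : Bool :=
  if h : i ∈ S then a i ^^ x ⟨i, h⟩ else a i

lemma bit_flipOn_mem_degLE (a : ι → Bool) (S : Finset ι) (i : ι) :
    (fun x => bit (flipOn a S x i)) ∈ degLE S 1 := by
  by_cases h : i ∈ S
  · cases ha : a i
    · simpa [flipOn, h, ha] using bit_mem_degLE (⟨i, h⟩ : S)
    · simp only [flipOn, h, ha, dif_pos, Bool.true_xor, bit_not]
      exact sub_mem (one_mem_degLE 1) (bit_mem_degLE (⟨i, h⟩ : S))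
  · simpa [flipOn, h] using const_mem_degLE 1 (bit (a i))

lemma flipOn_false (a : ι → Bool) (S : Finset ι) : flipOn a S (fun _ => false) = a := by
  funext i
  simp [flipOn]

lemma flipOn_eq_flipAt (a : ι → Bool) {S : Finset ι} {i : S} {x : S → Bool}
    (hx : ∀ l, x l = true ↔ l = i) : flipOn a S x = flipAt a i := by
  funext j
  by_cases hj : j = i
  · subst hj
    simp [flipOn, flipAt, (hx i).2 rfl]
  · have (h : j ∈ S) : x ⟨j, h⟩ = false := by simpa [hj, Subtype.ext_iff] using hx ⟨j, h⟩
    simp +contextual [flipOn, flipAt, hj, this]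

lemma HasRandomRep.flipOn {f : (ι → Bool) → Bool} {ε : ℝ} {d : ℕ} (h : HasRandomRep f ε d)
    (a : ι → Bool) (S : Finset ι) : HasRandomRep (fun x => f a ^^ f (flipOn a S x)) ε d := by
  have hcomp := h.comp (bit_flipOn_mem_degLE a S)
  cases f a
  · simpa only [Bool.false_xor] using! hcomp
  · simpa only [Bool.true_xor] using! hcomp.not

variable [Fintype ι]

/-- The coordinates at which `f` is sensitive at the point `a`; their number is the sensitivity of
`f` at `a`. -/
noncomputable def sensitiveCoords (f : (ι → Bool) → Bool) (a : ι → Bool) : Finset ι :=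
  {i | f (flipAt a i) ≠ f a}

@[simp] lemma mem_sensitiveCoords {f : (ι → Bool) → Bool} {a : ι → Bool} {i : ι} :
    i ∈ sensitiveCoords f a ↔ f (flipAt a i) ≠ f a := by
  simp [sensitiveCoords]

lemma isORLike_flipOn_sensitiveCoords (f : (ι → Bool) → Bool) (a : ι → Bool) :
    IsORLike fun x => f a ^^ f (flipOn a (sensitiveCoords f a) x) := by
  refine ⟨by simp [flipOn_false], fun i => ?_⟩
  have hi := mem_sensitiveCoords.1 i.2
  beta_reduce
  rw [flipOn_eq_flipAt (i := i)]
  · cases h : f a <;> simp_all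
  · simp

lemma pdeg_or_card_sensitiveCoords_le (f : (ι → Bool) → Bool) (a : ι → Bool) {K Q : ℕ}
    (hK : 2 * Fintype.card ι ≤ 2 ^ K) (hQ : 2 * (K + 1) ≤ 2 ^ Q) :
    pdeg (1 / 3) (ORf #(sensitiveCoords f a)) ≤
      11 * ((Q + 1) * (2 * (6 * Q + 40) * pdeg (1 / 3) f)) := by
  let S := sensitiveCoords f a
  have hf : HasRandomRep f (1 / 3) (pdeg (1 / 3) f) := hasRandomRep_pdeg f (by norm_num)
  have hS : 2 * Fintype.card S ≤ 2 ^ K := by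
    rw [Fintype.card_coe]
    exact (Nat.mul_le_mul_left 2 S.card_le_univ).trans hK
  have hor := (isORLike_flipOn_sensitiveCoords f a).hasRandomRep_or (hf.flipOn a S) hS hQ
  have hcomp := hor.comp fun l : S => bit_mem_degLE (S.equivFin l)
  refine HasRandomRep.pdeg_le ?_
  convert hcomp using 1
  funext x
  exact decide_eq_decide.2 S.equivFin.surjective.exists

end Sensitivity

section Noise

variable {ι : Type} {i j : ι} {a : ι → Bool}

@[simp] lemma flipAt_self : flipAt a i i = !a i := by simp [flipAt]

lemma flipAt_of_ne (h : j ≠ i) : flipAt a i j = a j := by simp [flipAt, h]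

@[simp] lemma flipAt_flipAt_self : flipAt (flipAt a i) i = a := by
  simp [flipAt]

lemma flipAt_comm : flipAt (flipAt a i) j = flipAt (flipAt a j) i := by
  by_cases h : i = j
  · rw [h]
  · simp [flipAt, h, Ne.symm h, Function.update_comm h]

/-- The mass given to `b` by the Bernoulli distribution with parameter `p`. -/
def bernoulliMass (p : ℝ) (b : Bool) : ℝ := if b then p else 1 - p

lemma prod_bernoulliMass_nonneg {q : ι → ℝ} (hq : ∀ l, q l ∈ Set.Icc 0 1) (s : Finset ι)
    (t : ι → Bool) : 0 ≤ ∏ l ∈ s, bernoulliMass (q l) (t l) :=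
  prod_nonneg fun l _ => by
    have := hq l
    cases t l <;> simp_all [bernoulliMass]

variable [Fintype ι]

lemma sum_le_sum_of_flipAt {u v : (ι → Bool) → ℝ} (i : ι)
    (h : ∀ t, u t + u (flipAt t i) ≤ v t + v (flipAt t i)) : ∑ t, u t ≤ ∑ t, v t := by
  have hflip (w : (ι → Bool) → ℝ) : ∑ t, w (flipAt t i) = ∑ t, w t :=
    Equiv.sum_comp (Function.Involutive.toPerm (flipAt · i) fun _ => flipAt_flipAt_self) w
  have hsum := sum_le_sum fun t (_ : t ∈ univ) => h t
  simp only [sum_add_distrib, hflip] at hsum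
  linarith

lemma hasDerivAt_sum_prod_bernoulliMass (p : ι → ℝ) (c : (ι → Bool) → ℝ) (θ : ℝ) :
    HasDerivAt (fun θ => ∑ t, (∏ l, bernoulliMass (θ * p l) (t l)) * c t)
      (∑ l, p l * ∑ t, (∏ j ∈ univ.erase l, bernoulliMass (θ * p j) (t j)) *
        ((if t l then 1 else -1) * c t)) θ := by
  have hmass (l : ι) (t : ι → Bool) : HasDerivAt (fun θ => bernoulliMass (θ * p l) (t l))
      ((if t l then 1 else -1) * p l) θ := by
    cases h : t l
    · simpa [bernoulliMass] using ((hasDerivAt_id θ).mul_const (p l)).const_sub 1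
    · simpa [bernoulliMass] using (hasDerivAt_id θ).mul_const (p l)
  refine (HasDerivAt.fun_sum fun t _ => (HasDerivAt.fun_finsetProd fun l _ => hmass l t).mul_const
    (c t)).congr_deriv ?_
  simp only [smul_eq_mul, sum_mul, mul_sum]
  rw [sum_comm]
  exact sum_congr rfl fun l _ => sum_congr rfl fun t _ => by ring

variable {q : ι → ℝ} {g : (ι → Bool) → Bool}

lemma sum_prod_bernoulliMass (q : ι → ℝ) : ∑ t : ι → Bool, ∏ l, bernoulliMass (q l) (t l) = 1 := by
  rw [← Fintype.piFinset_univ, ← prod_univ_sum]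
  simp [bernoulliMass]

lemma sum_prod_erase_bernoulliMass_le (hq : ∀ l, q l ∈ Set.Icc 0 1) (l : ι) :
    ∑ t, (∏ j ∈ univ.erase l, bernoulliMass (q j) (t j)) * ((if t l then 1 else -1) * bit (g t)) ≤
      ∑ t with l ∈ sensitiveCoords g t, ∏ j, bernoulliMass (q j) (t j) := by
  let w (t : ι → Bool) : ℝ := ∏ j ∈ univ.erase l, bernoulliMass (q j) (t j)
  have hw (t : ι → Bool) : 0 ≤ w t := prod_bernoulliMass_nonneg hq _ t
  have hwflip (t : ι → Bool) : w (flipAt t l) = w t :=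
    prod_congr rfl fun j hj => by rw [flipAt_of_ne (ne_of_mem_erase hj)]
  rw [sum_filter]
  refine sum_le_sum_of_flipAt l fun t => ?_
  simp only [mem_sensitiveCoords, flipAt_flipAt_self, flipAt_self,
    ← mul_prod_erase univ _ (mem_univ l)]
  change w t * _ + w (flipAt t l) * _ ≤
    (if _ then bernoulliMass _ _ * w t else 0) + if _ then bernoulliMass _ _ * w (flipAt t l) else 0
  rw [hwflip]
  have := hw t
  cases t l <;> cases hgt : g t <;> cases hgf : g (flipAt t l) <;> simp [bernoulliMass] <;> linarith

lemma sum_mul_sum_sensitiveCoords_le {P : ℝ} {s : ℕ} (hP : 0 ≤ P) (hq : ∀ l, q l ∈ Set.Icc 0 1)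
    (hs : ∀ t, #(sensitiveCoords g t) ≤ s) :
    ∑ l, P * ∑ t with l ∈ sensitiveCoords g t, ∏ j, bernoulliMass (q j) (t j) ≤ P * s := by
  rw [← mul_sum]
  refine mul_le_mul_of_nonneg_left ?_ hP
  calc ∑ l, ∑ t with l ∈ sensitiveCoords g t, ∏ j, bernoulliMass (q j) (t j)
      = ∑ t, #(sensitiveCoords g t) * ∏ j, bernoulliMass (q j) (t j) := by
        simp only [sum_filter]
        rw [sum_comm]
        simp only [Fintype.sum_ite_mem, sum_const, nsmul_eq_mul]
    _ ≤ ∑ t, s * ∏ j, bernoulliMass (q j) (t j) := sum_le_sum fun t _ =>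
        mul_le_mul_of_nonneg_right (by exact_mod_cast hs t) (prod_bernoulliMass_nonneg hq _ t)
    _ = s := by rw [← mul_sum, sum_prod_bernoulliMass, mul_one]

lemma sum_prod_bernoulliMass_mul_bit_le {p : ι → ℝ} {P : ℝ} {s : ℕ} (hp : ∀ l, p l ∈ Set.Icc 0 P)
    (hP : P ∈ Set.Icc 0 1) (hs : ∀ t, #(sensitiveCoords g t) ≤ s)
    (hg : g (fun _ => false) = false) :
    ∑ t, (∏ l, bernoulliMass (p l) (t l)) * bit (g t) ≤ P * s := by
  have hderiv := hasDerivAt_sum_prod_bernoulliMass p fun t => bit (g t)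
  obtain ⟨θ, ⟨hθ0, hθ1⟩, hslope⟩ := exists_hasDerivAt_eq_slope _ _ zero_lt_one
    (fun θ _ => (hderiv θ).continuousAt.continuousWithinAt) fun θ _ => hderiv θ
  have hzero : ∑ t, (∏ l, bernoulliMass (0 * p l) (t l)) * bit (g t) = 0 := by
    refine sum_eq_zero fun t _ => ?_
    by_cases ht : ∃ l, t l = true
    · obtain ⟨l, hl⟩ := ht
      rw [prod_eq_zero (mem_univ l) (by simp [bernoulliMass, hl]), zero_mul]
    · obtain rfl : t = fun _ => false := funext fun l => by simpa using not_exists.1 ht l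
      rw [hg, bit_false, mul_zero]
  have hθp (l : ι) : θ * p l ∈ Set.Icc 0 1 :=
    ⟨mul_nonneg hθ0.le (hp l).1, mul_le_one₀ hθ1.le (hp l).1 ((hp l).2.trans hP.2)⟩
  simp only [hzero, one_mul, sub_zero, div_one] at hslope
  rw [← hslope]
  refine le_trans (sum_le_sum fun l _ => ?_) (sum_mul_sum_sensitiveCoords_le hP.1 hθp hs)
  have hle := sum_prod_erase_bernoulliMass_le (g := g) hθp l
  have hnonneg : 0 ≤ ∑ t with l ∈ sensitiveCoords g t, ∏ j, bernoulliMass (θ * p j) (t j) :=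
    sum_nonneg fun t _ => prod_bernoulliMass_nonneg hθp _ t
  exact (mul_le_mul_of_nonneg_left hle (hp l).1).trans (mul_le_mul_of_nonneg_right (hp l).2 hnonneg)

lemma pi_real_ne_le (ν : ι → Measure Bool) [∀ l, IsProbabilityMeasure (ν l)] {P : ℝ} {s : ℕ}
    (hν : ∀ l, (ν l).real {true} ≤ P) (hP : P ∈ Set.Icc 0 1) {G : (ι → Bool) → Bool}
    (hs : ∀ t, #(sensitiveCoords G t) ≤ s) :
    (Measure.pi ν).real {t | G t ≠ G fun _ => false} ≤ P * s := by
  let g (t : ι → Bool) : Bool := G t ^^ G fun _ => false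
  have hsens (t : ι → Bool) : sensitiveCoords g t = sensitiveCoords G t := by
    ext
    simp [g]
  have hmass (l : ι) (b : Bool) : (ν l).real {b} = bernoulliMass ((ν l).real {true}) b := by
    cases b
    · rw [bernoulliMass, ← probReal_compl_eq_one_sub .of_discrete]
      congr 1
      ext b
      cases b <;> simp
    · rfl
  calc (Measure.pi ν).real {t | G t ≠ G fun _ => false}
      = ∑ t with g t = true, ∏ l, (ν l).real {t l} := by
        have hset : {t | G t ≠ G fun _ => false} = ({t | g t = true} : Finset (ι → Bool)) := by
          ext
          simp [g]
        rw [hset, ← sum_measureReal_singleton]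
        simp [measureReal_def, Measure.pi_singleton, ENNReal.toReal_prod]
    _ = ∑ t, (∏ l, bernoulliMass ((ν l).real {true}) (t l)) * bit (g t) := by
        simp only [← hmass, bit, mul_ite, mul_one, mul_zero, sum_filter]
    _ ≤ P * s := sum_prod_bernoulliMass_mul_bit_le (fun l => ⟨measureReal_nonneg, hν l⟩) hP
        (fun t => (hsens t).symm ▸ hs t) (by simp [g])

end Noise

section Simon

variable {ι : Type} {S : Finset ι} {i : ι}

/-- The point of the cube whose support is `S`. -/
noncomputable def pointOf (S : Finset ι) (i : ι) : Bool := decide (i ∈ S)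

lemma pointOf_erase (hi : i ∈ S) : pointOf (S.erase i) = flipAt (pointOf S) i := by
  funext j
  by_cases hj : j = i
  · subst hj
    simp [pointOf, hi]
  · simp [pointOf, hj, flipAt_of_ne hj]

variable [Fintype ι] {f : (ι → Bool) → Bool} {s : ℕ}

lemma exists_mem_sensitiveCoords_pointOf (hi : ∃ a, i ∈ sensitiveCoords f a) :
    ∃ S, i ∉ S ∧ i ∈ sensitiveCoords f (pointOf S) := by
  obtain ⟨a, ha⟩ := hi
  let S : Finset ι := {j | a j = true}
  have hS : pointOf S = a := by
    funext j
    simp [pointOf, S]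
  by_cases hiS : i ∈ S
  · refine ⟨S.erase i, notMem_erase i S, ?_⟩
    rw [pointOf_erase hiS, hS]
    simpa [eq_comm] using ha
  · exact ⟨S, hiS, hS ▸ ha⟩

lemma exists_card_le_mem_sensitiveCoords_pointOf (hs : ∀ a, #(sensitiveCoords f a) ≤ s)
    (hi : ∃ a, i ∈ sensitiveCoords f a) :
    ∃ S, i ∉ S ∧ #S ≤ 2 * s ∧ i ∈ sensitiveCoords f (pointOf S) := by
  obtain ⟨S, hS⟩ := exists_minimal_of_wellFoundedLT _ (exists_mem_sensitiveCoords_pointOf hi)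
  refine ⟨S, hS.prop.1, ?_, hS.prop.2⟩
  have hsub : S ⊆ sensitiveCoords f (pointOf S) ∪ sensitiveCoords f (flipAt (pointOf S) i) := by
    intro j hj
    by_contra hnot
    have hmin := hS.not_prop_of_lt (erase_ssubset hj)
    simp only [pointOf_erase hj, mem_erase, hS.prop.1, and_false, not_false_eq_true, true_and,
      mem_union, mem_sensitiveCoords, not_or, not_not] at hmin hnot
    rw [flipAt_comm, hnot.2, hnot.1] at hmin
    exact mem_sensitiveCoords.1 hS.prop.2 hmin
  calc #S ≤ #(sensitiveCoords f (pointOf S)) + #(sensitiveCoords f (flipAt (pointOf S) i)) :=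
        (card_le_card hsub).trans (card_union_le _ _)
    _ ≤ 2 * s := by linarith [hs (pointOf S), hs (flipAt (pointOf S) i)]

end Simon

section Hashing

variable {ι β : Type}

lemma measurePreserving_piecewise [Fintype ι] [MeasurableSpace β] (μ : Measure β)
    [IsProbabilityMeasure μ] (T : Finset ι) :
    MeasurePreserving (fun p : (ι → β) × (ι → β) => T.piecewise p.1 p.2)
      ((Measure.pi fun _ => μ).prod (.pi fun _ => μ)) (.pi fun _ => μ) := by
  have hmeas : Measurable fun p : (ι → β) × (ι → β) => T.piecewise p.1 p.2 :=
    measurable_pi_iff.2 fun l => by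
      by_cases hl : l ∈ T
      · simpa only [piecewise_eq_of_mem _ _ _ hl] using! (measurable_pi_apply l).comp measurable_fst
      · simpa only [piecewise_eq_of_notMem _ _ _ hl] using!
          (measurable_pi_apply l).comp measurable_snd
  refine ⟨hmeas, (Measure.pi_eq fun s hs => ?_).symm⟩
  have hpre : (fun p : (ι → β) × (ι → β) => T.piecewise p.1 p.2) ⁻¹' Set.univ.pi s =
      (T : Set ι).pi s ×ˢ ((Tᶜ : Finset ι) : Set ι).pi s := by
    ext p
    simp only [Set.mem_preimage, Set.mem_prod, Set.mem_pi, mem_coe, mem_compl]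
    refine ⟨fun h => ⟨fun l hl => ?_, fun l hl => ?_⟩, fun h l => ?_⟩
    · simpa [hl] using h l
    · simpa [hl] using h l
    · by_cases hl : l ∈ T
      · simpa [hl] using h.1 l hl
      · simpa [hl] using h.2 l hl
  rw [Measure.map_apply hmeas (.univ_pi hs), hpre, Measure.prod_prod, Measure.pi_pi_finset,
    Measure.pi_pi_finset, prod_mul_prod_compl]

lemma pi_real_eval_eq_and_exists_le [Fintype ι] [MeasurableSpace β] {μ : Measure β}
    [IsProbabilityMeasure μ] {S : Finset ι} {i : ι} {δ : ℝ} (hμ : ∀ b, μ.real {b} ≤ δ) (hi : i ∉ S)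
    (b₀ : β) : (Measure.pi fun _ => μ).real {u | u i = b₀ ∧ ∃ k ∈ S, u k = b₀} ≤ #S * δ ^ 2 := by
  have hunion : {u : ι → β | u i = b₀ ∧ ∃ k ∈ S, u k = b₀} =
      ⋃ k ∈ S, (({i, k} : Finset ι) : Set ι).pi fun _ => {b₀} := by
    ext u
    simp
  have hpair (k : ι) (hk : k ∈ S) : (Measure.pi fun _ => μ).real
      ((({i, k} : Finset ι) : Set ι).pi fun _ => {b₀}) ≤ δ ^ 2 := by
    have hik : i ≠ k := fun h => hi (h ▸ hk)
    rw [measureReal_def, Measure.pi_pi_finset, prod_const, card_pair hik, ENNReal.toReal_pow]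
    exact pow_le_pow_left₀ measureReal_nonneg (hμ b₀) 2
  rw [hunion]
  refine (measureReal_biUnion_finset_le _ _).trans ?_
  simpa only [nsmul_eq_mul] using sum_le_card_nsmul S _ _ hpair

/-- Given a hashing `h` into buckets, the point that copies `A` on the coordinates hashed to `b₀`,
and reads every other coordinate from the assignment `z` of bits to buckets. -/
noncomputable def fill (b₀ : β) (h : ι → β) (A : ι → Bool) (z : β → Bool) : ι → Bool :=
  fun l => if h l = b₀ then A l else z (h l)

/-- The indicator of the buckets hit by `S`. -/
noncomputable def occupied (h : ι → β) (S : Finset ι) : β → Bool :=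
  fun b => decide (∃ k ∈ S, h k = b)

variable {b₀ : β} {S : Finset ι} {i : ι}

lemma fill_occupied_piecewise {u : ι → β} (hi : u i = b₀) (hS : ∀ k ∈ S, u k ≠ b₀) (v : ι → β)
    (A : ι → Bool) :
    fill b₀ ((insert i S).piecewise u v) A (occupied ((insert i S).piecewise u v) S) =
      (insert i S).piecewise (Function.update (pointOf S) i (A i))
        (fill b₀ v A (occupied u S)) := by
  have hocc : occupied ((insert i S).piecewise u v) S = occupied u S := by
    funext b
    refine decide_eq_decide.2 (exists_congr fun k => and_congr_right fun hk => ?_)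
    rw [piecewise_eq_of_mem _ _ _ (mem_insert_of_mem hk)]
  have hiS : i ∉ S := fun h => hS i h hi
  funext l
  by_cases hl : l ∈ insert i S
  · obtain rfl | hlS := mem_insert.1 hl
    · simp [fill, hi]
    · have hli : l ≠ i := fun h => hiS (h ▸ hlS)
      have hlocc : occupied u S (u l) = true := decide_eq_true ⟨l, hlS, rfl⟩
      simp [fill, hocc, hlS, hli, hS l hlS, hlocc, pointOf]
  · simp [fill, hocc, hl]

variable [MeasurableSpace β] [DiscreteMeasurableSpace β] {μ : Measure β} [IsProbabilityMeasure μ]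
  {δ : ℝ}

lemma real_fill_occupied_le (hμ : ∀ b, μ.real {b} ≤ δ) (u : ι → β) (A : ι → Bool) (l : ι) :
    μ.real {b | (if b = b₀ then A l else occupied u S b) = true} ≤ (#S + 1) * δ := by
  have hsub : {b | (if b = b₀ then A l else occupied u S b) = true} ⊆
      (insert b₀ (S.image u) : Finset β) := fun b hb => by
    by_cases hb₀ : b = b₀
    · simp [hb₀]
    · simpa [hb₀, occupied] using hb
  have hδ : 0 ≤ δ := measureReal_nonneg.trans (hμ b₀)
  calc μ.real {b | (if b = b₀ then A l else occupied u S b) = true}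
      ≤ ∑ b ∈ insert b₀ (S.image u), μ.real {b} := by
        rw [sum_measureReal_singleton]
        exact measureReal_mono hsub
    _ ≤ #(insert b₀ (S.image u)) * δ := by
        simpa only [nsmul_eq_mul] using sum_le_card_nsmul _ _ δ fun b _ => hμ b
    _ ≤ (#S + 1) * δ := mul_le_mul_of_nonneg_right
        (by exact_mod_cast (card_insert_le _ _).trans (Nat.add_le_add_right card_image_le 1)) hδ

variable [Fintype ι] {f : (ι → Bool) → Bool} {s : ℕ}

lemma card_sensitiveCoords_piecewise_le (hs : ∀ a, #(sensitiveCoords f a) ≤ s) (T : Finset ι)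
    (x t : ι → Bool) : #(sensitiveCoords (fun t => f (T.piecewise x t)) t) ≤ s := by
  refine (card_le_card fun l hl => ?_).trans (hs (T.piecewise x t))
  have hflip : T.piecewise x (flipAt t l) =
      if l ∈ T then T.piecewise x t else flipAt (T.piecewise x t) l := by
    funext j
    split_ifs with hlT <;> by_cases hj : j = l <;> by_cases hjT : j ∈ T <;>
      simp_all [flipAt_of_ne]
  rw [mem_sensitiveCoords] at hl ⊢
  rw [hflip] at hl
  split_ifs at hl with hlT
  · exact absurd rfl hl
  · exact hl

lemma pi_real_comp_ne_le (τ : ι → β → Bool) {P : ℝ} (hτ : ∀ l, μ.real {b | τ l b = true} ≤ P)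
    (hP : P ∈ Set.Icc 0 1) (hs : ∀ a, #(sensitiveCoords f a) ≤ s) :
    (Measure.pi fun _ => μ).real {v | f (fun l => τ l (v l)) ≠ f fun _ => false} ≤ P * s := by
  have hmap (l : ι) : IsProbabilityMeasure (μ.map (τ l)) :=
    Measure.isProbabilityMeasure_map (Measurable.of_discrete).aemeasurable
  have hpi := Measure.pi_map_pi (μ := fun _ : ι => μ) (f := τ)
    fun _ => (Measurable.of_discrete).aemeasurable
  have hnoise := pi_real_ne_le (fun l => μ.map (τ l)) (P := P) (fun l => ?_) hP hs
  · have hmeas : Measurable fun (v : ι → β) l => τ l (v l) :=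
      measurable_pi_lambda _ fun l => Measurable.of_discrete.comp (measurable_pi_apply l)
    rwa [← hpi, map_measureReal_apply hmeas .of_discrete] at hnoise
  · rw [map_measureReal_apply .of_discrete .of_discrete]
    exact hτ l

lemma pi_real_fill_occupied_ne_le (hs : ∀ a, #(sensitiveCoords f a) ≤ s)
    (hμ : ∀ b, μ.real {b} ≤ δ) (hSδ : (#S + 1) * δ ≤ 1) {u : ι → β} (hi : u i = b₀)
    (hS : ∀ k ∈ S, u k ≠ b₀) (A : ι → Bool) :
    (Measure.pi fun _ => μ).real {v | f (fill b₀ ((insert i S).piecewise u v) A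
        (occupied ((insert i S).piecewise u v) S)) ≠ f (Function.update (pointOf S) i (A i))} ≤
      (#S + 1) * δ * s := by
  let x : ι → Bool := Function.update (pointOf S) i (A i)
  have hx : (insert i S).piecewise x (fun _ => false) = x := by
    funext l
    by_cases hl : l ∈ insert i S
    · simp only [piecewise_eq_of_mem _ _ _ hl]
    · rw [mem_insert, not_or] at hl
      simp [x, hl, pointOf]
  have hδ : 0 ≤ δ := measureReal_nonneg.trans (hμ b₀)
  have hnoise := pi_real_comp_ne_le (f := fun t => f ((insert i S).piecewise x t))
    (fun l b => if b = b₀ then A l else occupied u S b) (real_fill_occupied_le hμ u A)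
    ⟨by positivity, hSδ⟩ (card_sensitiveCoords_piecewise_le hs _ x)
  simpa only [fill_occupied_piecewise hi hS, hx] using! hnoise

lemma pi_real_fill_piecewise_ne_le (hs : ∀ a, #(sensitiveCoords f a) ≤ s)
    (hμ : ∀ b, μ.real {b} ≤ δ) (hS : #S ≤ 2 * s) (hδ : (2 * s + 1) * δ ≤ 1) (u : ι → β)
    (A : ι → Bool) :
    (Measure.pi fun _ => μ).real {v | (u i = b₀ ∧ ∀ k ∈ S, u k ≠ b₀) ∧
      f (fill b₀ ((insert i S).piecewise u v) A (occupied ((insert i S).piecewise u v) S)) ≠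
        f (Function.update (pointOf S) i (A i))} ≤
      {u | u i = b₀}.indicator (fun _ => (2 * s + 1) * δ * s) u := by
  have hδ0 : 0 ≤ δ := measureReal_nonneg.trans (hμ b₀)
  have hSδ : (#S + 1) * δ ≤ (2 * s + 1) * δ :=
    mul_le_mul_of_nonneg_right (by exact_mod_cast Nat.add_le_add_right hS 1) hδ0
  by_cases hu : u i = b₀ ∧ ∀ k ∈ S, u k ≠ b₀
  · rw [Set.indicator_of_mem (by exact hu.1)]
    refine (measureReal_mono fun v hv => hv.2).trans
      ((pi_real_fill_occupied_ne_le hs hμ (hSδ.trans hδ) hu.1 hu.2 A).trans ?_)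
    gcongr
  · simpa [hu] using Set.indicator_nonneg (fun _ _ => by positivity) u

variable [Finite β]

lemma pi_real_fill_ne_le (hs : ∀ a, #(sensitiveCoords f a) ≤ s) (hμ : ∀ b, μ.real {b} ≤ δ)
    (hi : i ∉ S) (hS : #S ≤ 2 * s) (hδ : (2 * s + 1) * δ ≤ 1) (b₀ : β) (A : ι → Bool) :
    (Measure.pi fun _ => μ).real {h | h i = b₀ ∧
      f (fill b₀ h A (occupied h S)) ≠ f (Function.update (pointOf S) i (A i))} ≤
      5 * s ^ 2 * δ ^ 2 := by
  let y (h : ι → β) : ι → Bool := fill b₀ h A (occupied h S)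
  let T := insert i S
  let x : ι → Bool := Function.update (pointOf S) i (A i)
  let coll : Set (ι → β) := {u | u i = b₀ ∧ ∃ k ∈ S, u k = b₀}
  let E : Set ((ι → β) × (ι → β)) :=
    {p | (p.1 i = b₀ ∧ ∀ k ∈ S, p.1 k ≠ b₀) ∧ f (y (T.piecewise p.1 p.2)) ≠ f x}
  have hδ0 : 0 ≤ δ := measureReal_nonneg.trans (hμ b₀)
  have hfst : (Measure.pi fun _ : ι => μ).real {u | u i = b₀} ≤ δ :=
    ((measurePreserving_eval (fun _ : ι => μ) i).measureReal_preimage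
      (MeasurableSet.of_discrete (s := {b₀})).nullMeasurableSet).trans_le (hμ b₀)
  have hsub : (fun p : (ι → β) × (ι → β) => T.piecewise p.1 p.2) ⁻¹'
      {h | h i = b₀ ∧ f (y h) ≠ f x} ⊆ coll ×ˢ Set.univ ∪ E := by
    rintro ⟨u, v⟩ ⟨hui, hne⟩
    replace hui : u i = b₀ := by simpa [T] using hui
    by_cases hu : ∃ k ∈ S, u k = b₀
    · exact .inl ⟨⟨hui, hu⟩, trivial⟩
    · push Not at hu
      exact .inr ⟨⟨hui, hu⟩, hne⟩
  have hS' : (#S : ℝ) ≤ 2 * s := by exact_mod_cast hS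
  have hs2 : (s : ℝ) ≤ s ^ 2 := by exact_mod_cast Nat.le_self_pow two_ne_zero s
  calc (Measure.pi fun _ => μ).real {h | h i = b₀ ∧ f (y h) ≠ f x}
      ≤ ((Measure.pi fun _ => μ).prod (.pi fun _ => μ)).real (coll ×ˢ Set.univ ∪ E) :=
        ((measurePreserving_piecewise μ T).measureReal_preimage
          (MeasurableSet.of_discrete).nullMeasurableSet).symm.trans_le (measureReal_mono hsub)
    _ ≤ #S * δ ^ 2 + δ * ((2 * s + 1) * δ * s) := by
        refine (measureReal_union_le _ _).trans (add_le_add ?_ ?_)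
        · rw [measureReal_prod_prod, probReal_univ, mul_one]
          exact pi_real_eval_eq_and_exists_le hμ hi b₀
        · refine (prod_real_le_mul _ _ fun u =>
            pi_real_fill_piecewise_ne_le hs hμ hS hδ u A).trans ?_
          gcongr
    _ ≤ 5 * s ^ 2 * δ ^ 2 := by nlinarith [sq_nonneg δ]

end Hashing

section Decoding

lemma exists_finset_subset_card_le_finrank {K ι : Type*} [Field K] (G : Finset ι)
    (W : Submodule K (ι → K)) [FiniteDimensional K W] :
    ∃ B ⊆ G, #B ≤ Module.finrank K W ∧ ∀ w ∈ W, (∀ i ∈ B, w i = 0) → ∀ i ∈ G, w i = 0 := by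
  let v (i : ι) : Module.Dual K W := (LinearMap.proj i).comp W.subtype
  obtain ⟨b, hbG, -, hspan, hb⟩ :=
    exists_linearIndepOn_extension (linearIndepOn_empty K v) (Set.empty_subset (G : Set ι))
  lift b to Finset ι using G.finite_toSet.subset hbG
  refine ⟨b, mod_cast hbG, ?_, fun w hw hwb i hi => ?_⟩
  · rw [← Subspace.dual_finrank_eq]
    simpa using hb.fintype_card_le_finrank
  · have hker : Submodule.span K (v '' b) ≤ LinearMap.ker (Module.Dual.eval K W ⟨w, hw⟩) :=
      Submodule.span_le.2 (Set.image_subset_iff.2 hwb)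
    exact hker (hspan (Set.mem_image_of_mem v hi))

lemma forall_mem_eq_of_determining {K ι β : Type*} [Field K] {W : Submodule K (ι → K)}
    {G B : Finset ι} (hBG : B ⊆ G) (hB : ∀ w ∈ W, (∀ i ∈ B, w i = 0) → ∀ i ∈ G, w i = 0)
    {v : ι → β → K} (hv : ∀ i, Function.Injective (v i)) {y y' : ι → K} (hy : y ∈ W)
    (hy' : y' ∈ W) {A A' : ι → β} (hA : ∀ i ∈ G, y i = v i (A i))
    (hA' : ∀ i ∈ G, y' i = v i (A' i)) (hAA' : ∀ i ∈ B, A i = A' i) : ∀ i ∈ G, A i = A' i := by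
  intro i hi
  have hzero := hB _ (sub_mem hy hy') (fun j hj => by
    rw [Pi.sub_apply, hA j (hBG hj), hA' j (hBG hj), hAA' j hj, sub_self]) i hi
  exact hv i ((hA i hi).symm.trans ((sub_eq_zero.1 hzero).trans (hA' i hi)))

variable {ι : Type}

lemma card_filter_card_le_mul_pow_le (J : Finset ι) (k : ℕ) {x : ℝ} (hx : x ∈ Set.Icc 0 1) :
    #{T ∈ J.powerset | #T ≤ k} * x ^ k ≤ (x + 1) ^ #J :=
  calc #{T ∈ J.powerset | #T ≤ k} * x ^ k ≤ ∑ T ∈ J.powerset with #T ≤ k, x ^ #T := by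
        simpa only [nsmul_eq_mul] using card_nsmul_le_sum _ (x ^ #·) (x ^ k) fun T hT =>
          pow_le_pow_of_le_one hx.1 hx.2 (mem_filter.1 hT).2
    _ ≤ ∑ T ∈ J.powerset, x ^ #T :=
        sum_le_sum_of_subset_of_nonneg (filter_subset _ _) fun _ _ _ => pow_nonneg hx.1 _
    _ = (x + 1) ^ #J := by simpa using sum_pow_mul_eq_add_pow x 1 J

lemma card_filter_card_le_pow_le {J : Finset ι} {k : ℕ} (hk : 20 * k ≤ #J) :
    #{T ∈ J.powerset | #T ≤ k} ^ 20 ≤ 2 ^ (6 * #J) := by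
  have hle := card_filter_card_le_mul_pow_le J k (x := 1 / 16) (by norm_num)
  set Z := #{T ∈ J.powerset | #T ≤ k}
  have hpow : (Z : ℝ) ^ 20 * (1 / 16 : ℝ) ^ #J ≤ (2 ^ 6 / 16 : ℝ) ^ #J :=
    calc (Z : ℝ) ^ 20 * (1 / 16 : ℝ) ^ #J ≤ Z ^ 20 * (1 / 16 : ℝ) ^ (20 * k) :=
          mul_le_mul_of_nonneg_left (pow_le_pow_of_le_one (by norm_num) (by norm_num) hk)
            (by positivity)
      _ = (Z * (1 / 16 : ℝ) ^ k) ^ 20 := by rw [mul_pow, ← pow_mul, mul_comm k]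
      _ ≤ ((1 / 16 + 1 : ℝ) ^ #J) ^ 20 := pow_le_pow_left₀ (by positivity) hle 20
      _ = ((1 / 16 + 1 : ℝ) ^ 20) ^ #J := pow_right_comm _ _ _
      _ ≤ (2 ^ 6 / 16 : ℝ) ^ #J := pow_le_pow_left₀ (by norm_num) (by norm_num) _
  rw [div_pow, div_pow, one_pow, mul_one_div, ← pow_mul] at hpow
  exact_mod_cast (div_le_div_iff_of_pos_right (by positivity)).1 hpow

variable [Fintype ι] {J : Finset ι} {W : Submodule ℝ (ι → ℝ)} {v : ι → Bool → ℝ}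
  {F : (ι → Bool) → ι → ℝ} {k r : ℕ}

lemma card_le_of_decodable (hv : ∀ i, Function.Injective (v i)) (hF : ∀ A, F A ∈ W)
    (hW : Module.finrank ℝ W ≤ r) :
    #{A | #{i ∈ J | F A i ≠ v i (A i)} ≤ k} ≤
      2 ^ (Fintype.card ι - #J) *
        (#{T ∈ J.powerset | #T ≤ k} * #{T ∈ J.powerset | #T ≤ k + r}) := by
  choose B hBsub hBcard hB using fun D => exists_finset_subset_card_le_finrank (J \ D) W
  let D (A : ι → Bool) : Finset ι := {i ∈ J | F A i ≠ v i (A i)}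
  let code (A : ι → Bool) : Finset ι × Finset ι × Finset ι :=
    ({i ∈ Jᶜ | A i = true}, D A, {i ∈ D A ∪ B (D A) | A i = true})
  have hDJ (A : ι → Bool) : D A ⊆ J := filter_subset _ _
  have hcorrect (A : ι → Bool) : ∀ i ∈ J \ D A, F A i = v i (A i) := fun i hi => by
    simpa [D, (mem_sdiff.1 hi).1] using (mem_sdiff.1 hi).2
  rw [← card_compl, ← card_powerset, ← card_product, ← card_product]
  refine card_le_card_of_injOn code (fun A hA => ?_) fun A _ A' _ hcode => ?_
  · have hD : #(D A) ≤ k := (mem_filter.1 hA).2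
    simp only [coe_product, Set.mem_prod, mem_coe, mem_filter, mem_powerset, code]
    refine ⟨filter_subset _ _, ⟨hDJ A, hD⟩, (filter_subset _ _).trans
      (union_subset (hDJ A) ((hBsub _).trans sdiff_subset)), ?_⟩
    exact (card_filter_le _ _).trans
      ((card_union_le _ _).trans (Nat.add_le_add hD ((hBcard _).trans hW)))
  · simp only [code, Prod.mk.injEq] at hcode
    obtain ⟨hcompl, hD, hknown⟩ := hcode
    have heq_of_filter {X : Finset ι}
        (hX : ({i ∈ X | A i = true} : Finset ι) = {i ∈ X | A' i = true}) : ∀ i ∈ X, A i = A' i :=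
      fun i hi => Bool.eq_iff_iff.2 (filter_inj'.1 hX hi)
    have hA' := hcorrect A'
    rw [← hD] at hknown hA'
    have hAA' := heq_of_filter hknown
    funext i
    by_cases hiJ : i ∈ J
    · by_cases hiD : i ∈ D A
      · exact hAA' i (mem_union_left _ hiD)
      · exact forall_mem_eq_of_determining (hBsub _) (hB _) hv (hF A) (hF A') (hcorrect A) hA'
          (fun j hj => hAA' j (mem_union_right _ hj)) i (mem_sdiff.2 ⟨hiJ, hiD⟩)
    · exact heq_of_filter hcompl i (mem_compl.2 hiJ)

lemma card_lt_of_decodable (hv : ∀ i, Function.Injective (v i)) (hF : ∀ A, F A ∈ W) (hr : 0 < r)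
    (hW : Module.finrank ℝ W ≤ r)
    (hgood : 2 ^ Fintype.card ι ≤ 2 * #{A | 40 * #{i ∈ J | F A i ≠ v i (A i)} ≤ #J}) :
    #J < 40 * r := by
  by_contra! hJ
  let k := #J / 40
  let Z := #{T ∈ J.powerset | #T ≤ k + k}
  have hZ : Z ^ 20 ≤ 2 ^ (6 * #J) := card_filter_card_le_pow_le (by omega)
  have hcount : 2 ^ Fintype.card ι ≤ 2 * (2 ^ (Fintype.card ι - #J) * (Z * Z)) := by
    refine hgood.trans (Nat.mul_le_mul_left 2 ?_)
    simp only [mul_comm 40, ← Nat.le_div_iff_mul_le (show 0 < 40 by norm_num)]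
    refine (card_le_of_decodable hv hF (hW.trans (by omega))).trans
      (Nat.mul_le_mul_left _ (Nat.mul_le_mul_right _ (card_le_card fun T => ?_)))
    simp only [mem_filter]
    exact And.imp_right fun hT => hT.trans (Nat.le_add_right k k)
  have hJZ : 2 ^ #J ≤ 2 * (Z * Z) := by
    refine Nat.le_of_mul_le_mul_left ?_ (Nat.two_pow_pos (Fintype.card ι - #J))
    rwa [← pow_add, Nat.sub_add_cancel (card_le_univ J), mul_left_comm]
  have hpow : 2 ^ (10 * #J) ≤ 2 ^ (10 + 6 * #J) :=
    calc 2 ^ (10 * #J) = (2 ^ #J) ^ 10 := by rw [← pow_mul, mul_comm]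
      _ ≤ (2 * (Z * Z)) ^ 10 := Nat.pow_le_pow_left hJZ 10
      _ = 2 ^ 10 * Z ^ 20 := by ring
      _ ≤ 2 ^ (10 + 6 * #J) := by
        rw [pow_add]
        exact Nat.mul_le_mul_left _ hZ
  have := (Nat.pow_le_pow_iff_right Nat.one_lt_two).1 hpow
  omega

end Decoding

section SensitivityLowerBound

variable {ι : Type} [Fintype ι]

lemma card_le_two_mul_card_filter {α : Type*} [Fintype α] {e : α → ℕ} {k m : ℕ} (hm : 0 < m)
    (he : 2 * k * ∑ x, e x ≤ Fintype.card α * m) :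
    Fintype.card α ≤ 2 * #{x | k * e x ≤ m} := by
  have hbad : #{x | ¬k * e x ≤ m} * m ≤ ∑ x, k * e x :=
    (card_nsmul_le_sum _ (fun x => k * e x) m fun x hx =>
      (not_le.1 (mem_filter.1 hx).2).le).trans (sum_le_univ_sum_of_nonneg fun _ => Nat.zero_le _)
  have hle : m * (2 * #{x | ¬k * e x ≤ m}) ≤ m * Fintype.card α := by
    rw [← mul_sum] at hbad
    linarith
  have hsplit := card_filter_add_card_filter_not (s := univ) (fun x => k * e x ≤ m)
  have := Nat.le_of_mul_le_mul_left hle hm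
  rw [card_univ] at hsplit
  omega

lemma integral_card_eq_sum {Ω : Type*} [Finite Ω] [MeasurableSpace Ω] [DiscreteMeasurableSpace Ω]
    (P : Measure Ω) [IsFiniteMeasure P] (J : Ω → Finset ι) :
    ∫ ω, (#(J ω) : ℝ) ∂P = ∑ i, P.real {ω | i ∈ J ω} := by
  have hcard (ω : Ω) : (#(J ω) : ℝ) = ∑ i, {ω | i ∈ J ω}.indicator 1 ω := by
    simp [Set.indicator_apply]
  simp only [hcard]
  rw [integral_finsetSum _ fun _ _ => .of_finite]
  exact sum_congr rfl fun i _ => integral_indicator_one .of_discrete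

lemma exists_card_mul_le_card_sub_sum {Ω α : Type*} [Finite Ω] [MeasurableSpace Ω]
    [DiscreteMeasurableSpace Ω] [Fintype α] (P : Measure Ω) [IsProbabilityMeasure P]
    {J : Ω → Finset ι} {D : Ω → α → Finset ι} {p q c : ℝ} (hc : 0 ≤ c)
    (hJ : ∀ i, p ≤ P.real {ω | i ∈ J ω}) (hD : ∀ i x, P.real {ω | i ∈ D ω x} ≤ q) :
    ∃ ω, Fintype.card α * Fintype.card ι * (p - c * q) ≤
      Fintype.card α * #(J ω) - c * ∑ x, (#(D ω x) : ℝ) := by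
  obtain ⟨ω, hω⟩ := exists_integral_le (μ := P)
    (f := fun ω => Fintype.card α * #(J ω) - c * ∑ x, (#(D ω x) : ℝ)) .of_finite
  refine ⟨ω, le_trans ?_ hω⟩
  rw [integral_sub .of_finite .of_finite, integral_const_mul, integral_const_mul,
    integral_finsetSum _ fun _ _ => .of_finite, integral_card_eq_sum]
  simp only [integral_card_eq_sum]
  have hsumJ : Fintype.card ι * p ≤ ∑ i, P.real {ω | i ∈ J ω} := by
    simpa using card_nsmul_le_sum univ _ p fun i _ => hJ i
  have hsumD : ∑ x : α, ∑ i, P.real {ω | i ∈ D ω x} ≤ Fintype.card α * (Fintype.card ι * q) := by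
    simpa using sum_le_card_nsmul univ _ _ fun x _ => sum_le_card_nsmul univ _ q fun i _ => hD i x
  calc Fintype.card α * Fintype.card ι * (p - c * q)
      = Fintype.card α * (Fintype.card ι * p) -
          c * (Fintype.card α * (Fintype.card ι * q)) := by ring
    _ ≤ _ := by gcongr

lemma exists_card_le_and_sum_card_le {Ω α : Type*} [Finite Ω] [MeasurableSpace Ω]
    [DiscreteMeasurableSpace Ω] [Fintype α] [Nonempty α] (P : Measure Ω) [IsProbabilityMeasure P]
    {J : Ω → Finset ι} {D : Ω → α → Finset ι} {M k : ℕ} (hM : 0 < M)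
    (hJ : ∀ i, (M : ℝ)⁻¹ ≤ P.real {ω | i ∈ J ω})
    (hD : ∀ i x, 2 * k * P.real {ω | i ∈ D ω x} ≤ (M : ℝ)⁻¹) (hk : 0 < k) :
    ∃ ω, Fintype.card ι ≤ 2 * M * #(J ω) ∧ k * ∑ x, #(D ω x) ≤ Fintype.card α * #(J ω) := by
  have hk' : (0 : ℝ) < 2 * k := by positivity
  obtain ⟨ω, hω⟩ := exists_card_mul_le_card_sub_sum P (q := (M : ℝ)⁻¹ / (2 * k)) k.cast_nonneg hJ
    fun i x => by
      rw [le_div_iff₀' hk']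
      exact hD i x
  have hhalf : (M : ℝ)⁻¹ - k * ((M : ℝ)⁻¹ / (2 * k)) = (2 * M : ℝ)⁻¹ := by
    field_simp
    norm_num
  rw [hhalf] at hω
  have hα : (0 : ℝ) < Fintype.card α := by exact_mod_cast Fintype.card_pos
  have hJω : (Fintype.card α : ℝ) * (Fintype.card ι * (2 * M : ℝ)⁻¹) ≤
      Fintype.card α * #(J ω) := by
    have : (0 : ℝ) ≤ k * ∑ x, (#(D ω x) : ℝ) := by positivity
    linarith
  refine ⟨ω, ?_, ?_⟩
  · have := le_of_mul_le_mul_left hJω hα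
    rw [← div_eq_mul_inv, div_le_iff₀' (by positivity)] at this
    exact_mod_cast this
  · have : (0 : ℝ) ≤ Fintype.card α * Fintype.card ι * (2 * M : ℝ)⁻¹ := by positivity
    have hle : (k : ℝ) * ∑ x, (#(D ω x) : ℝ) ≤ Fintype.card α * #(J ω) := by linarith
    exact_mod_cast hle

variable {β : Type} {f : (ι → Bool) → Bool} {i : ι} {s d : ℕ}

lemma injective_update_of_mem_sensitiveCoords {a : ι → Bool} (hi : i ∈ sensitiveCoords f a) :
    Function.Injective fun b => f (Function.update a i b) := by
  rw [mem_sensitiveCoords, flipAt] at hi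
  have hself := Function.update_eq_self i a
  rintro (_ | _) (_ | _) h <;> cases ha : a i <;> grind

lemma prod_real_apply_fill_ne_le [Finite β] [MeasurableSpace β] [DiscreteMeasurableSpace β]
    {μ : Measure β} [IsProbabilityMeasure μ] {Ω : Type*} [Finite Ω] [MeasurableSpace Ω]
    [DiscreteMeasurableSpace Ω] (P : Measure Ω) [IsProbabilityMeasure P] {F : Ω → (ι → Bool) → ℝ}
    {S : Finset ι} {δ ε : ℝ} (hF : ∀ a, P.real {ω | F ω a ≠ bit (f a)} ≤ ε)
    (hs : ∀ a, #(sensitiveCoords f a) ≤ s) (hμ : ∀ b, μ.real {b} ≤ δ) (hi : i ∉ S)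
    (hS : #S ≤ 2 * s) (hδ : (2 * s + 1) * δ ≤ 1) (b₀ : β) (A : ι → Bool) :
    ((Measure.pi fun _ => μ).prod P).real {p | p.1 i = b₀ ∧
      F p.2 (fill b₀ p.1 A (occupied p.1 S)) ≠ bit (f (Function.update (pointOf S) i (A i)))} ≤
      δ * ε + 5 * s ^ 2 * δ ^ 2 := by
  let y (h : ι → β) : ι → Bool := fill b₀ h A (occupied h S)
  let bad : Set (ι → β) := {h | h i = b₀ ∧ f (y h) ≠ f (Function.update (pointOf S) i (A i))}
  let E : Set ((ι → β) × Ω) := {p | p.1 i = b₀ ∧ F p.2 (y p.1) ≠ bit (f (y p.1))}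
  have hε : 0 ≤ ε := measureReal_nonneg.trans (hF A)
  have hslice (h : ι → β) :
      P.real (Prod.mk h ⁻¹' E) ≤ {h | h i = b₀}.indicator (fun _ => ε) h := by
    by_cases hh : h i = b₀
    · simpa [E, hh] using hF (y h)
    · simp [E, hh]
  have hfst : (Measure.pi fun _ : ι => μ).real {u | u i = b₀} ≤ δ :=
    ((measurePreserving_eval (fun _ : ι => μ) i).measureReal_preimage
      (MeasurableSet.of_discrete (s := {b₀})).nullMeasurableSet).trans_le (hμ b₀)
  calc _ ≤ ((Measure.pi fun _ => μ).prod P).real (E ∪ bad ×ˢ Set.univ) := measureReal_mono <| by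
        rintro ⟨h, ω⟩ ⟨hh, hne⟩
        by_cases hy : f (y h) = f (Function.update (pointOf S) i (A i))
        · exact .inl ⟨hh, by rwa [hy]⟩
        · exact .inr ⟨⟨hh, hy⟩, trivial⟩
    _ ≤ δ * ε + 5 * s ^ 2 * δ ^ 2 := by
        refine (measureReal_union_le _ _).trans (add_le_add ?_ ?_)
        · exact (prod_real_le_mul _ _ hslice).trans (mul_le_mul_of_nonneg_right hfst hε)
        · rw [measureReal_prod_prod, probReal_univ, mul_one]
          exact pi_real_fill_ne_le hs hμ hi hS hδ b₀ A

lemma exists_hashing [Fintype β] (hd : HasRandomRep f (1 / 320) d)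
    (hs : ∀ a, #(sensitiveCoords f a) ≤ s) (hs0 : 0 < s) (hβ : 1600 * s ^ 2 ≤ Fintype.card β)
    {S : ι → Finset ι} (hi : ∀ i, i ∉ S i) (hS : ∀ i, #(S i) ≤ 2 * s) (b₀ : β) :
    ∃ G ∈ degLE ι d, ∃ h : ι → β, Fintype.card ι ≤ 2 * Fintype.card β * #{i | h i = b₀} ∧
      2 * 40 * ∑ A : ι → Bool, #{i ∈ {i | h i = b₀} | G (fill b₀ h A (occupied h (S i))) ≠
        bit (f (Function.update (pointOf (S i)) i (A i)))} ≤
        Fintype.card (ι → Bool) * #{i | h i = b₀} := by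
  obtain ⟨Ω, _, _, _, P, _, F, hFd, hF⟩ := hd
  have : Nonempty β := ⟨b₀⟩
  let _ : MeasurableSpace β := ⊤
  let μ : Measure β := ProbabilityTheory.uniformOn Set.univ
  let δ : ℝ := (Fintype.card β : ℝ)⁻¹
  have hμ (b : β) : μ.real {b} = δ := by
    simp [μ, δ, measureReal_def, ProbabilityTheory.uniformOn_univ]
  have hcard : (0 : ℝ) < Fintype.card β := by exact_mod_cast Fintype.card_pos
  have hδ0 : 0 < δ := inv_pos.2 hcard
  have hsδ : 1600 * s ^ 2 * δ ≤ 1 :=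
    mul_inv_le_one_of_le₀ (by exact_mod_cast hβ) hcard.le
  have hs1 : (1 : ℝ) ≤ s := by exact_mod_cast hs0
  have hδ : (2 * s + 1) * δ ≤ 1 :=
    (mul_le_mul_of_nonneg_right (by nlinarith) hδ0.le).trans hsδ
  let J (p : (ι → β) × Ω) : Finset ι := {i | p.1 i = b₀}
  let D (p : (ι → β) × Ω) (A : ι → Bool) : Finset ι :=
    {i ∈ J p | F p.2 (fill b₀ p.1 A (occupied p.1 (S i))) ≠
      bit (f (Function.update (pointOf (S i)) i (A i)))}
  let ν := (Measure.pi fun _ : ι => μ).prod P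
  have hJ (i : ι) : δ ≤ ν.real {p | i ∈ J p} := by
    have heval := (measurePreserving_eval (fun _ : ι => μ) i).comp
      (measurePreserving_fst (ν := P))
    simpa [J, hμ] using! (heval.measureReal_preimage
      (MeasurableSet.of_discrete (s := {b₀})).nullMeasurableSet).ge
  have hD (i : ι) (A : ι → Bool) : 2 * (80 : ℕ) * ν.real {p | i ∈ D p A} ≤ δ := by
    have hle := prod_real_apply_fill_ne_le P hF hs (fun b => (hμ b).le) (hi i) (hS i) hδ b₀ A
    simp only [D, J, mem_filter, mem_univ, true_and, Nat.cast_ofNat]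
    calc _ ≤ 2 * 80 * (δ * (1 / 320) + 5 * s ^ 2 * δ ^ 2) :=
          mul_le_mul_of_nonneg_left hle (by norm_num)
      _ ≤ δ := by nlinarith
  obtain ⟨⟨h, ω⟩, hω⟩ :=
    exists_card_le_and_sum_card_le ν Fintype.card_pos hJ hD (by norm_num)
  exact ⟨F ω, hFd ω, h, hω⟩

lemma card_le_mul_pow [Fintype β] (hd : HasRandomRep f (1 / 320) d)
    (hf : ∀ i, ∃ a, i ∈ sensitiveCoords f a) (hs : ∀ a, #(sensitiveCoords f a) ≤ s) (hs0 : 0 < s)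
    (hβ : 1600 * s ^ 2 ≤ Fintype.card β) :
    Fintype.card ι ≤ 80 * Fintype.card β * (Fintype.card β + 1) ^ d := by
  cases isEmpty_or_nonempty ι
  · simp
  choose S hiS hS hsens using fun i => exists_card_le_mem_sensitiveCoords_pointOf hs (hf i)
  obtain ⟨b₀⟩ : Nonempty β :=
    Fintype.card_pos_iff.1 (show 0 < 1600 * s ^ 2 by positivity |>.trans_le hβ)
  obtain ⟨G, hG, h, hcard, hbad⟩ := exists_hashing hd hs hs0 hβ hiS hS b₀
  have hJ : 0 < #{i | h i = b₀} := Nat.pos_of_mul_pos_left (Fintype.card_pos.trans_le hcard)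
  let W : Submodule ℝ (ι → ℝ) :=
    (degLE β d).map (LinearMap.funLeft ℝ ℝ fun i => occupied h (S i))
  have hfill (A : ι → Bool) : (fun i => G (fill b₀ h A (occupied h (S i)))) ∈ W := by
    refine ⟨G ∘ fill b₀ h A, comp_mem_degLE hG fun l => ?_, rfl⟩
    by_cases hl : h l = b₀
    · simpa [fill, hl] using const_mem_degLE 1 _
    · simpa [fill, hl] using bit_mem_degLE (h l)
  have hW : Module.finrank ℝ W ≤ (Fintype.card β + 1) ^ d :=
    (Submodule.finrank_map_le _ _).trans (finrank_degLE_le d)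
  have hlt := card_lt_of_decodable
    (fun i => bit_injective.comp (injective_update_of_mem_sensitiveCoords (hsens i))) hfill
    (by positivity) hW (by simpa using card_le_two_mul_card_filter hJ hbad)
  calc Fintype.card ι ≤ 2 * Fintype.card β * #{i | h i = b₀} := hcard
    _ ≤ 2 * Fintype.card β * (40 * (Fintype.card β + 1) ^ d) := Nat.mul_le_mul_left _ hlt.le
    _ = _ := by ring

lemma one_le_pdeg_of_mem_sensitiveCoords {a : ι → Bool} (hi : i ∈ sensitiveCoords f a) :
    1 ≤ pdeg (1 / 3) f := by
  by_contra! h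
  obtain ⟨Ω, _, _, _, P, _, F, hFd, hF⟩ := hasRandomRep_pdeg f (ε := 1 / 3) (by norm_num)
  rw [mem_sensitiveCoords] at hi
  have hconst (ω : Ω) : F ω a = F ω (flipAt a i) := by
    have hω := hFd ω
    rw [Nat.lt_one_iff.1 h, degLE, pow_zero, Submodule.mem_one] at hω
    obtain ⟨x, hx⟩ := hω
    rw [← hx]
    rfl
  have huniv : (Set.univ : Set Ω) ⊆
      {ω | F ω a ≠ bit (f a)} ∪ {ω | F ω (flipAt a i) ≠ bit (f (flipAt a i))} := fun ω _ => by
    by_contra hω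
    simp only [Set.mem_union, Set.mem_ofPred_eq, not_or, not_not] at hω
    exact hi (bit_injective (hω.2.symm.trans ((hconst ω).symm.trans hω.1)))
  have hle := (measureReal_mono (μ := P) huniv).trans (measureReal_union_le _ _)
  rw [probReal_univ] at hle
  linarith [hF a, hF (flipAt a i)]

lemma card_le_pow_pdeg (hf : ∀ i, ∃ a, i ∈ sensitiveCoords f a)
    (hs : ∀ a, #(sensitiveCoords f a) ≤ s) :
    Fintype.card ι ≤ (s + 1) ^ (1320 * pdeg (1 / 3) f) := by
  obtain _ | ⟨⟨i⟩⟩ := isEmpty_or_nonempty ι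
  · simp
  obtain ⟨a, ha⟩ := hf i
  have hs0 : 0 < s := (card_pos.2 ⟨i, ha⟩).trans_le (hs a)
  have hd : 1 ≤ pdeg (1 / 3) f := one_le_pdeg_of_mem_sensitiveCoords ha
  have hamp : HasRandomRep f (1 / 320) (2 * 50 * pdeg (1 / 3) f) :=
    ((hasRandomRep_pdeg f (by norm_num)).amplify 50).mono (by norm_num) le_rfl
  have hcard := card_le_mul_pow (β := Fin (1600 * s ^ 2)) hamp hf hs hs0 (by simp)
  rw [Fintype.card_fin] at hcard
  have htwo (k : ℕ) : 2 ^ k ≤ (s + 1) ^ k := Nat.pow_le_pow_left (by omega) k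
  have hbase : 1600 * s ^ 2 + 1 ≤ (s + 1) ^ 13 :=
    calc 1600 * s ^ 2 + 1 ≤ 2 ^ 11 * (s + 1) ^ 2 := by nlinarith
      _ ≤ (s + 1) ^ 11 * (s + 1) ^ 2 := Nat.mul_le_mul_right _ (htwo 11)
      _ = (s + 1) ^ 13 := by ring
  have hfactor : 80 * (1600 * s ^ 2) ≤ (s + 1) ^ 20 :=
    calc 80 * (1600 * s ^ 2) ≤ 2 ^ 7 * (s + 1) ^ 13 := Nat.mul_le_mul (by norm_num) (by omega)
      _ ≤ (s + 1) ^ 7 * (s + 1) ^ 13 := Nat.mul_le_mul_right _ (htwo 7)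
      _ = (s + 1) ^ 20 := by ring
  calc Fintype.card ι
      ≤ (s + 1) ^ 20 * ((s + 1) ^ 13) ^ (2 * 50 * pdeg (1 / 3) f) :=
        hcard.trans (Nat.mul_le_mul hfactor (Nat.pow_le_pow_left hbase _))
    _ = (s + 1) ^ (20 + 13 * (2 * 50 * pdeg (1 / 3) f)) := by rw [← pow_mul, ← pow_add]
    _ ≤ (s + 1) ^ (1320 * pdeg (1 / 3) f) := Nat.pow_le_pow_right (by omega) (by omega)

end SensitivityLowerBound

section Logarithms

open Real

lemma le_two_pow_ceil_logb {x : ℝ} (hx : 0 < x) : x ≤ 2 ^ ⌈logb 2 x⌉₊ := by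
  rw [← rpow_natCast, ← logb_le_iff_le_rpow one_lt_two hx]
  exact Nat.le_ceil _

lemma two_le_logb_two {x : ℝ} (hx : 4 ≤ x) : 2 ≤ logb 2 x := by
  rw [le_logb_iff_rpow_le one_lt_two (by linarith)]
  norm_num
  exact hx

lemma one_le_logb_two {x : ℝ} (hx : 2 ≤ x) : 1 ≤ logb 2 x := by
  rwa [le_logb_iff_rpow_le one_lt_two (by linarith), rpow_one]

lemma logb_two_add_one_le {x : ℝ} (hx : 2 ≤ x) : logb 2 (x + 1) ≤ 2 * logb 2 x := by
  rw [← Nat.cast_ofNat, ← logb_pow]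
  exact logb_le_logb_of_le one_lt_two (by linarith) (by nlinarith)

lemma rpow_div_le_of_le_mul {c α A B L d t q : ℝ} (hc : 0 < c) (hα : 0 < α) (hA : 0 ≤ A)
    (hB : 0 ≤ B) (hL : 0 ≤ L) (hd : 0 ≤ d) (ht : 0 ≤ t) (hq : 0 ≤ q) (hLt : L ≤ A * d * t)
    (htq : α * t ^ c ≤ B * d * q) :
    L ^ (c / (c + 1)) ≤ (A ^ c * B / α) ^ (1 / (c + 1)) * (d * q ^ (1 / (c + 1))) := by
  have hc1 : 0 < c + 1 := by linarith
  have htc : t ^ c ≤ B * d * q / α := (le_div_iff₀' hα).2 htq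
  have hLc : L ^ c ≤ A ^ c * B / α * (d ^ (c + 1) * q) :=
    calc L ^ c ≤ (A * d * t) ^ c := rpow_le_rpow hL hLt hc.le
      _ = A ^ c * d ^ c * t ^ c := by
        rw [mul_rpow (by positivity) ht, mul_rpow hA hd]
      _ ≤ A ^ c * d ^ c * (B * d * q / α) := by gcongr
      _ = A ^ c * B / α * (d ^ (c + 1) * q) := by
        rw [rpow_add_one' hd hc1.ne']
        ring
  calc L ^ (c / (c + 1)) = (L ^ c) ^ (1 / (c + 1)) := by rw [← rpow_mul hL, mul_one_div]
    _ ≤ (A ^ c * B / α * (d ^ (c + 1) * q)) ^ (1 / (c + 1)) :=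
      rpow_le_rpow (by positivity) hLc (by positivity)
    _ = _ := by
      rw [mul_rpow (by positivity) (by positivity), mul_rpow (by positivity) hq, ← rpow_mul hd,
        mul_one_div_cancel hc1.ne', rpow_one]

variable {ι : Type} [Fintype ι] {f : (ι → Bool) → Bool} {s : ℕ}

lemma logb_card_le_mul_pdeg (hf : ∀ i, ∃ a, i ∈ sensitiveCoords f a)
    (hs : ∀ a, #(sensitiveCoords f a) ≤ s) (hn : 0 < Fintype.card ι) :
    logb 2 (Fintype.card ι) ≤ 1320 * pdeg (1 / 3) f * logb 2 (s + 1) := by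
  have hle : (Fintype.card ι : ℝ) ≤ (s + 1) ^ (1320 * pdeg (1 / 3) f) := by
    exact_mod_cast card_le_pow_pdeg hf hs
  simpa [logb_pow] using logb_le_logb_of_le one_lt_two (by exact_mod_cast hn) hle

lemma pdeg_or_card_sensitiveCoords_le_mul_logb_sq (hn : 4 ≤ Fintype.card ι)
    (f : (ι → Bool) → Bool) (a : ι → Bool) :
    (pdeg (1 / 3) (ORf #(sensitiveCoords f a)) : ℝ) ≤
      9240 * pdeg (1 / 3) f * logb 2 (logb 2 (Fintype.card ι)) ^ 2 := by
  set L := logb 2 (Fintype.card ι)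
  set l := logb 2 L
  have hL : 2 ≤ L := two_le_logb_two (by exact_mod_cast hn)
  have hl : 1 ≤ l := one_le_logb_two hL
  have hK : 2 * Fintype.card ι ≤ 2 ^ (⌈L⌉₊ + 1) := by
    rw [pow_succ']
    have : (Fintype.card ι : ℝ) ≤ 2 ^ ⌈L⌉₊ := le_two_pow_ceil_logb (by positivity)
    exact Nat.mul_le_mul_left 2 (by exact_mod_cast this)
  have hQ : 2 * (⌈L⌉₊ + 1 + 1) ≤ 2 ^ (⌈l⌉₊ + 3) := by
    have hLl : L ≤ 2 ^ ⌈l⌉₊ := le_two_pow_ceil_logb (by linarith)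
    have : (2 * (⌈L⌉₊ + 1 + 1) : ℝ) ≤ 2 ^ (⌈l⌉₊ + 3) := by
      rw [pow_add]
      linarith [Nat.ceil_lt_add_one (show 0 ≤ L by linarith)]
    exact_mod_cast this
  have hor : (pdeg (1 / 3) (ORf #(sensitiveCoords f a)) : ℝ) ≤
      11 * (((⌈l⌉₊ + 3 : ℕ) + 1) * (2 * (6 * (⌈l⌉₊ + 3 : ℕ) + 40) * pdeg (1 / 3) f)) := by
    exact_mod_cast pdeg_or_card_sensitiveCoords_le f a hK hQ
  have hQl : ((⌈l⌉₊ + 3 : ℕ) : ℝ) ≤ 5 * l := by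
    push_cast
    linarith [Nat.ceil_lt_add_one (show 0 ≤ l by linarith)]
  calc _ ≤ 11 * ((5 * l + l) * (2 * (6 * (5 * l) + 40 * l) * pdeg (1 / 3) f)) := by
        refine hor.trans ?_
        gcongr
        linarith
    _ = _ := by ring

lemma exists_mul_logb_rpow_le_pdeg_or {c a : ℝ} (hc : 0 < c) (ha : 0 < a)
    (hOR : ∀ m : ℕ, 2 ≤ m → a * logb 2 m ^ c ≤ (pdeg (1 / 3) (ORf m) : ℝ)) :
    ∃ α > 0, ∀ m : ℕ, 0 < m → α * logb 2 (m + 1) ^ c ≤ (pdeg (1 / 3) (ORf m) : ℝ) := by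
  refine ⟨min (a / 2 ^ c) 1, by positivity, fun m hm => ?_⟩
  obtain rfl | hm2 := eq_or_lt_of_le (Nat.succ_le_of_lt hm)
  · have hsens : (0 : Fin 1) ∈ sensitiveCoords (ORf 1) fun _ => false := by
      simp [ORf, flipAt]
    have hone : (1 : ℝ) ≤ pdeg (1 / 3) (ORf 1) := by
      exact_mod_cast one_le_pdeg_of_mem_sensitiveCoords hsens
    have hlog : logb 2 (((Nat.succ 0 : ℕ) : ℝ) + 1) = 1 := by norm_num
    rw [hlog, one_rpow, mul_one]
    exact (min_le_right _ _).trans hone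
  · have hm' : (2 : ℝ) ≤ m := by exact_mod_cast hm2
    have hlog : 0 ≤ logb 2 (m : ℝ) := zero_le_one.trans (one_le_logb_two hm')
    calc _ ≤ a / 2 ^ c * (2 * logb 2 m) ^ c :=
          mul_le_mul (min_le_left _ _) (rpow_le_rpow (logb_nonneg one_lt_two (by linarith))
            (logb_two_add_one_le hm') hc.le) (rpow_nonneg (logb_nonneg one_lt_two (by linarith)) _)
            (by positivity)
      _ = a * logb 2 m ^ c := by
        rw [mul_rpow zero_le_two hlog]
        field_simp
      _ ≤ _ := hOR m hm2

end Logarithms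

end ProbDegree

open Finset ProbDegree in
theorem sharper_lower_bound_general (c a : ℝ) (hc : 0 < c) (ha : 0 < a)
    (hOR : ∀ m : ℕ, 2 ≤ m → a * (Real.logb 2 m) ^ c ≤ (pdeg (1/3) (ORf m) : ℝ)) :
    ∃ a' : ℝ, 0 < a' ∧ ∀ (ι : Type) [Fintype ι], 4 ≤ Fintype.card ι →
      ∀ f : (ι → Bool) → Bool, TrulyVariate f →
        a' * (Real.logb 2 (Fintype.card ι)) ^ (c / (c + 1)) /
          (Real.logb 2 (Real.logb 2 (Fintype.card ι))) ^ (2 / (c + 1)) ≤ (pdeg (1/3) f : ℝ) := by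
  obtain ⟨α, hα, hor⟩ := exists_mul_logb_rpow_le_pdeg_or hc ha hOR
  refine ⟨((1320 ^ c * 9240 / α) ^ (1 / (c + 1)))⁻¹, by positivity, fun ι _ hn f hf => ?_⟩
  have hL : 2 ≤ Real.logb 2 (Fintype.card ι) := two_le_logb_two (by exact_mod_cast hn)
  have hl := one_le_logb_two hL
  have hsens (i : ι) : ∃ x, i ∈ sensitiveCoords f x := by simpa [flipAt] using hf i
  obtain ⟨x, hx⟩ := Finite.exists_max fun x => #(sensitiveCoords f x)
  have hs : 0 < #(sensitiveCoords f x) := by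
    obtain ⟨i⟩ : Nonempty ι := Fintype.card_pos_iff.1 (by omega)
    obtain ⟨y, hy⟩ := hsens i
    exact (card_pos.2 ⟨i, hy⟩).trans_le (hx y)
  have hlog := rpow_div_le_of_le_mul hc hα (by norm_num) (by norm_num) (by linarith)
    (Nat.cast_nonneg _) (Real.logb_nonneg one_lt_two (by simp)) (sq_nonneg _)
    (logb_card_le_mul_pdeg hsens hx (by omega))
    ((hor _ hs).trans (pdeg_or_card_sensitiveCoords_le_mul_logb_sq hn f x))
  rwa [← Real.rpow_natCast_mul (by linarith), mul_one_div, ← inv_mul_le_iff₀ (by positivity),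
    ← div_le_iff₀ (by positivity)] at hlog

theorem sharper_lower_bound (c a : ℝ) (hc : 0 < c) (ha : 0 < a)
    (hOR : ∀ m : ℕ, 2 ≤ m → a * (Real.logb 2 m) ^ c ≤ (pdeg (1/3) (ORf m) : ℝ)) :
    ∃ a' : ℝ, 0 < a' ∧ ∀ n : ℕ, 4 ≤ n →
      ∀ f : (Fin n → Bool) → Bool, TrulyVariate f →
        a' * (Real.logb 2 n) ^ (c / (c + 1)) / (Real.logb 2 (Real.logb 2 n)) ^ 2
          ≤ (pdeg (1/3) f : ℝ) := by
  obtain ⟨a', ha', h⟩ := sharper_lower_bound_general c a hc ha hOR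
  refine ⟨a', ha', fun n hn f hf => le_trans ?_ (h (Fin n) (by simpa using hn) f hf)⟩
  have hL := ProbDegree.two_le_logb_two (show (4 : ℝ) ≤ n by exact_mod_cast hn)
  have hl := ProbDegree.one_le_logb_two hL
  rw [Fintype.card_fin, ← Real.rpow_natCast _ 2]
  gcongr
  exact div_le_self zero_le_two (by linarith)
end

section
/- There exists a constant C > 0 such that for all sufficiently large n there exists a truly n-variate Boolean function f : {0,1}^n → {0,1} with pdeg(f) ≤ C·√(log₂ n). -/
open scoped Classical

/-!
Take about `√(log n)` address blocks of length `2 ^ √(log n)` and index the remaining variables, the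
data bits, by distinct tuples of positions, one position per block. The function reads the blocks as
the one-hot encoding of a tuple and returns its data bit. As long as no block contains two ones, it
is computed exactly by a polynomial of degree one more than the number of blocks. To kill that
polynomial when some block does contain two ones, multiply it by a probabilistic polynomial for the
NOR of the `2 ^ O(√(log n))` quadratic monomials that detect such a collision.

The probabilistic degree of NOR on `N` bits is `O(log N)`: if `R` is a random set of coordinates
whose density is inverse to the number of ones up to a constant, then `1 - ∑ u ∈ R, X u` vanishes
with constant probability by the second moment method, while it is always `1` on the zero input. So
one multiplies such factors over all dyadic densities.
-/

theorem totalDegree_bind₁_le {σ τ R : Type*} [CommSemiring R] {M : τ → MvPolynomial σ R} {e : ℕ}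
    (hM : ∀ k, (M k).totalDegree ≤ e) (P : MvPolynomial τ R) :
    (MvPolynomial.bind₁ M P).totalDegree ≤ P.totalDegree * e := by
  rw [MvPolynomial.bind₁, MvPolynomial.aeval_def, MvPolynomial.eval₂_eq]
  refine MvPolynomial.totalDegree_finsetSum_le fun m hm => ?_
  calc (algebraMap R (MvPolynomial σ R) (P.coeff m) * ∏ k ∈ m.support, M k ^ m k).totalDegree
      ≤ 0 + ∑ k ∈ m.support, (M k ^ m k).totalDegree :=
        (MvPolynomial.totalDegree_mul _ _).trans <| add_le_add
          (MvPolynomial.totalDegree_C _).le (MvPolynomial.totalDegree_finsetProd _ _)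
    _ ≤ ∑ k ∈ m.support, m k * e := by
        rw [zero_add]
        gcongr with k
        exact (MvPolynomial.totalDegree_pow _ _).trans (Nat.mul_le_mul_left _ (hM k))
    _ = (∑ k ∈ m.support, m k) * e := (Finset.sum_mul _ _ _).symm
    _ ≤ P.totalDegree * e := Nat.mul_le_mul_right _ (MvPolynomial.le_totalDegree hm)

theorem prod_mem_stdSimplex {κ 𝕜 : Type*} {Ω : κ → Type*} [Fintype κ] [∀ k, Fintype (Ω k)]
    [CommSemiring 𝕜] [PartialOrder 𝕜] [IsOrderedRing 𝕜] {w : ∀ k, Ω k → 𝕜}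
    (hw : ∀ k, w k ∈ stdSimplex 𝕜 (Ω k)) :
    (fun ω : ∀ k, Ω k => ∏ k, w k (ω k)) ∈ stdSimplex 𝕜 (∀ k, Ω k) := by
  refine ⟨fun ω => Finset.prod_nonneg fun k _ => (hw k).1 (ω k), ?_⟩
  rw [← Fintype.piFinset_univ, ← Finset.prod_univ_sum]
  exact Finset.prod_eq_one fun k _ => (hw k).2

section ProbabilisticPolynomials

variable {ι κ Ω : Type}

theorem HasProbPoly.pdeg_le {f : (ι → Bool) → Bool} {ε : ℝ} {d : ℕ} (h : HasProbPoly f ε d) :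
    pdeg ε f ≤ d :=
  Nat.sInf_le h

theorem HasProbPoly.mono {f : (ι → Bool) → Bool} {ε δ : ℝ} {d e : ℕ} (h : HasProbPoly f ε d)
    (hε : ε ≤ δ) (hd : d ≤ e) : HasProbPoly f δ e := by
  obtain ⟨k, w, P, w_nonneg, w_sum, P_degree, P_error⟩ := h
  exact ⟨k, w, P, w_nonneg, w_sum, fun i => (P_degree i).trans hd, fun a => (P_error a).trans hε⟩

theorem HasProbPoly.of_mem_stdSimplex [Fintype Ω] {f : (ι → Bool) → Bool} {ε : ℝ} {d : ℕ}
    {w : Ω → ℝ} (hw : w ∈ stdSimplex ℝ Ω) (P : Ω → MvPolynomial ι ℝ)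
    (hd : ∀ ω, (P ω).totalDegree ≤ d)
    (hε : ∀ a, ∑ ω with evalBool a (P ω) ≠ if f a then 1 else 0, w ω ≤ ε) :
    HasProbPoly f ε d := by
  let q := (Fintype.equivFin Ω).symm
  refine ⟨Fintype.card Ω, w ∘ q, P ∘ q, fun i => hw.1 (q i), ?_, fun i => hd (q i), fun a => ?_⟩
  · exact (Equiv.sum_comp q w).trans hw.2
  · refine le_of_eq_of_le ?_ (hε a)
    rw [Finset.sum_filter, Finset.sum_filter]
    exact Equiv.sum_comp q fun ω => if evalBool a (P ω) ≠ if f a then 1 else 0 then w ω else 0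

theorem HasProbPoly.mul_left {f g : (ι → Bool) → Bool} {ε : ℝ} {d e : ℕ}
    (hg : HasProbPoly g ε d) {S : MvPolynomial ι ℝ} (hS : S.totalDegree ≤ e)
    (hf : ∀ a, (if f a then 1 else 0) = evalBool a S * if g a then 1 else 0) :
    HasProbPoly f ε (e + d) := by
  obtain ⟨k, w, P, w_nonneg, w_sum, P_degree, P_error⟩ := hg
  refine ⟨k, w, fun i => S * P i, w_nonneg, w_sum, fun i => ?_, fun a => ?_⟩
  · exact (MvPolynomial.totalDegree_mul _ _).trans (add_le_add hS (P_degree i))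
  · refine (Finset.sum_le_sum_of_subset_of_nonneg ?_ fun i _ _ => w_nonneg i).trans (P_error a)
    refine Finset.monotone_filter_right _ fun i _ => mt fun h => ?_
    rw [hf, ← h, evalBool, map_mul, evalBool, evalBool]

theorem HasProbPoly.comp {g : (κ → Bool) → Bool} {ε : ℝ} {d e : ℕ} (hg : HasProbPoly g ε d)
    {m : (ι → Bool) → κ → Bool} {M : κ → MvPolynomial ι ℝ} (hM : ∀ k, (M k).totalDegree ≤ e)
    (hm : ∀ a k, evalBool a (M k) = if m a k then 1 else 0) :
    HasProbPoly (g ∘ m) ε (d * e) := by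
  obtain ⟨k, w, P, w_nonneg, w_sum, P_degree, P_error⟩ := hg
  have evalBool_bind₁ (a : ι → Bool) (i : Fin k) :
      evalBool a (MvPolynomial.bind₁ M (P i)) = evalBool (m a) (P i) := by
    rw [evalBool, MvPolynomial.eval, MvPolynomial.eval₂Hom_bind₁]
    exact congrArg (MvPolynomial.eval · (P i)) (funext (hm a))
  refine ⟨k, w, fun i => MvPolynomial.bind₁ M (P i), w_nonneg, w_sum, fun i => ?_, fun a => ?_⟩
  · exact (totalDegree_bind₁_le hM _).trans (Nat.mul_le_mul_right _ (P_degree i))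
  · simpa only [evalBool_bind₁, Function.comp_apply] using P_error (m a)

theorem evalBool_X (a : ι → Bool) (i : ι) :
    evalBool a (MvPolynomial.X i) = if a i then 1 else 0 :=
  MvPolynomial.eval_X i

theorem HasProbPoly.comp_equiv {f : (ι → Bool) → Bool} {ε : ℝ} {d : ℕ} (h : HasProbPoly f ε d)
    (q : ι ≃ κ) : HasProbPoly (fun a : κ → Bool => f (a ∘ q)) ε d := by
  have := h.comp (m := fun a => a ∘ q) (fun k => (MvPolynomial.totalDegree_X (q k)).le)
    (fun a k => evalBool_X a (q k))
  rwa [mul_one] at this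

end ProbabilisticPolynomials

section TrulyVariate

variable {ι κ : Type}

theorem TrulyVariate.comp_equiv {f : (ι → Bool) → Bool} (h : TrulyVariate f) (q : ι ≃ κ) :
    TrulyVariate (fun a : κ → Bool => f (a ∘ q)) := by
  intro k
  obtain ⟨a, ha⟩ := h (q.symm k)
  refine ⟨a ∘ q.symm, ?_⟩
  simpa only [Function.update_comp_equiv, Function.comp_apply, Function.comp_assoc,
    Equiv.symm_comp_self, Function.comp_id] using ha

theorem TrulyVariate.of_forall_exists_minimal {f : (ι → Bool) → Bool}
    (h : ∀ i, ∃ a, f a = true ∧ ∀ b ≤ a, f b = true → b i = true) : TrulyVariate f := by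
  intro i
  obtain ⟨a, ha, hmin⟩ := h i
  have ai : a i = true := hmin a le_rfl ha
  refine ⟨a, fun hflip => ?_⟩
  rw [ai, ha] at hflip
  have flip_true := hmin _ (update_le_self_iff.2 (Bool.false_le (a i))) hflip
  exact Bool.false_ne_true ((Function.update_self i _ a).symm.trans flip_true)

end TrulyVariate

section RandomSubset

variable {U : Type*} [Fintype U] {p : ℝ}

/-- The probability of drawing `R` when every element of `U` is chosen independently with
probability `p`. -/
noncomputable def subsetWeight (p : ℝ) (R : Finset U) : ℝ :=
  p ^ R.card * (1 - p) ^ Rᶜ.card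

theorem sum_subsetWeight_of_superset (p : ℝ) (T : Finset U) :
    ∑ R with T ⊆ R, subsetWeight p R = p ^ T.card := by
  have factor (u : U) : (p + if u ∉ T then 1 - p else 0) = if u ∈ T then p else 1 := by
    split_ifs <;> ring
  have superset_iff (R : Finset U) : (∀ u ∈ Rᶜ, u ∉ T) ↔ T ⊆ R := by
    simp only [Finset.mem_compl, not_imp_not, Finset.subset_iff]
  -- Expand the product: a set `R` missing an element of `T` contributes a vanishing term.
  calc ∑ R with T ⊆ R, subsetWeight p R
      = ∑ R : Finset U, (∏ _u ∈ R, p) * ∏ u ∈ Rᶜ, if u ∉ T then 1 - p else 0 := by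
        simp only [Finset.prod_ite_zero, superset_iff, Finset.prod_const, mul_ite, mul_zero,
          ← Finset.sum_filter, subsetWeight]
    _ = ∏ u, (p + if u ∉ T then 1 - p else 0) := (Fintype.prod_add _ _).symm
    _ = p ^ T.card := by
        simp only [factor, Finset.prod_ite_mem, Finset.univ_inter, Finset.prod_const]

theorem subsetWeight_mem_stdSimplex (hp₀ : 0 ≤ p) (hp₁ : p ≤ 1) :
    subsetWeight p ∈ stdSimplex ℝ (Finset U) := by
  refine ⟨fun R => mul_nonneg (pow_nonneg hp₀ _) (pow_nonneg (sub_nonneg.2 hp₁) _), ?_⟩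
  simpa using sum_subsetWeight_of_superset p (∅ : Finset U)

theorem sum_subsetWeight_mul_ite_superset (p : ℝ) (T : Finset U) :
    ∑ R, subsetWeight p R * (if T ⊆ R then 1 else 0) = p ^ T.card := by
  simp only [mul_ite, mul_one, mul_zero, ← Finset.sum_filter, sum_subsetWeight_of_superset]

theorem sum_subsetWeight_mul_card_inter (p : ℝ) (S : Finset U) :
    ∑ R, subsetWeight p R * (R ∩ S).card = S.card * p := by
  have card_eq (R : Finset U) : ((R ∩ S).card : ℝ) = ∑ u ∈ S, if {u} ⊆ R then 1 else 0 := by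
    simp only [Finset.singleton_subset_iff, Finset.sum_boole, Finset.filter_mem_eq_inter,
      Finset.inter_comm]
  simp only [card_eq, Finset.mul_sum]
  rw [Finset.sum_comm]
  simp only [sum_subsetWeight_mul_ite_superset, Finset.card_singleton, pow_one, Finset.sum_const,
    nsmul_eq_mul]

theorem sum_subsetWeight_mul_card_inter_sq (p : ℝ) (S : Finset U) :
    ∑ R, subsetWeight p R * (R ∩ S).card ^ 2 = S.card * (p - p ^ 2) + (S.card * p) ^ 2 := by
  have pow_card_pair (u v : U) :
      p ^ ({u, v} : Finset U).card = (if u = v then p - p ^ 2 else 0) + p ^ 2 := by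
    by_cases huv : u = v
    · simp [huv]
    · simp [huv, Finset.card_pair huv]
  have card_sq_eq (R : Finset U) :
      ((R ∩ S).card : ℝ) ^ 2 = ∑ u ∈ S, ∑ v ∈ S, if {u, v} ⊆ R then 1 else 0 := by
    rw [Finset.inter_comm, ← Finset.filter_mem_eq_inter, ← Finset.sum_boole, sq,
      Finset.sum_mul_sum]
    simp only [Finset.insert_subset_iff, Finset.singleton_subset_iff, ite_and, ite_mul, one_mul,
      zero_mul]
  simp only [card_sq_eq, Finset.mul_sum]
  rw [Finset.sum_comm]
  simp only [Finset.sum_comm (s := Finset.univ), sum_subsetWeight_mul_ite_superset, pow_card_pair,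
    Finset.sum_add_distrib, Finset.sum_ite_eq, Finset.sum_ite_mem, Finset.inter_self,
    Finset.sum_const, nsmul_eq_mul]
  ring

/-- The probability that a random subset of density `p` does not meet `S` in exactly one point. -/
noncomputable def missProb (p : ℝ) (S : Finset U) : ℝ :=
  ∑ R with (R ∩ S).card ≠ 1, subsetWeight p R

theorem missProb_nonneg (hp₀ : 0 ≤ p) (hp₁ : p ≤ 1) (S : Finset U) : 0 ≤ missProb p S :=
  Finset.sum_nonneg fun R _ => (subsetWeight_mem_stdSimplex hp₀ hp₁).1 R

theorem missProb_le_one (hp₀ : 0 ≤ p) (hp₁ : p ≤ 1) (S : Finset U) : missProb p S ≤ 1 :=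
  (Finset.sum_le_sum_of_subset_of_nonneg (Finset.subset_univ _) fun R _ _ =>
    (subsetWeight_mem_stdSimplex hp₀ hp₁).1 R).trans (subsetWeight_mem_stdSimplex hp₀ hp₁).2.le

theorem missProb_le_one_sub_mean_mul (hp₀ : 0 ≤ p) (hp₁ : p ≤ 1) (S : Finset U) :
    missProb p S ≤ 1 - S.card * p * (1 - S.card * p) := by
  have w_mem := subsetWeight_mem_stdSimplex (U := U) hp₀ hp₁
  -- Markov's inequality for `(|R ∩ S| - 1) ^ 2`, which is at least `1` unless it vanishes.
  have one_le_sq {m : ℕ} (hm : m ≠ 1) : (1 : ℝ) ≤ (m - 1) ^ 2 := by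
    have : (0 : ℤ) < (m - 1) ^ 2 := sq_pos_of_ne_zero (by omega)
    exact_mod_cast Int.add_one_le_of_lt this
  calc missProb p S
      ≤ ∑ R with (R ∩ S).card ≠ 1, subsetWeight p R * ((R ∩ S).card - 1) ^ 2 :=
        Finset.sum_le_sum fun R hR =>
          le_mul_of_one_le_right (w_mem.1 R) (one_le_sq (Finset.mem_filter.1 hR).2)
    _ ≤ ∑ R, subsetWeight p R * ((R ∩ S).card - 1) ^ 2 :=
        Finset.sum_le_sum_of_subset_of_nonneg (Finset.subset_univ _) fun R _ _ =>
          mul_nonneg (w_mem.1 R) (sq_nonneg _)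
    _ = ∑ R, (subsetWeight p R * (R ∩ S).card ^ 2 - 2 * (subsetWeight p R * (R ∩ S).card)
          + subsetWeight p R) := Finset.sum_congr rfl fun R _ => by ring
    _ = 1 - S.card * p * (1 - S.card * p) - S.card * p ^ 2 := by
        rw [Finset.sum_add_distrib, Finset.sum_sub_distrib, ← Finset.mul_sum,
          sum_subsetWeight_mul_card_inter, sum_subsetWeight_mul_card_inter_sq, w_mem.2]
        ring
    _ ≤ 1 - S.card * p * (1 - S.card * p) := sub_le_self _ (by positivity)

theorem missProb_half_pow_log_le {S : Finset U} (hS : S.Nonempty) :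
    missProb ((1 / 2) ^ (Nat.log 2 S.card + 2)) S ≤ 13 / 16 := by
  set j := Nat.log 2 S.card
  have lower : (2 : ℝ) ^ j ≤ S.card := by
    exact_mod_cast Nat.pow_log_le_self 2 hS.card_ne_zero
  have upper : (S.card : ℝ) ≤ 2 ^ j * 2 := by
    exact_mod_cast (Nat.lt_pow_succ_log_self one_lt_two S.card).le
  have mean_eq : (S.card : ℝ) * (1 / 2) ^ (j + 2) = S.card / (2 ^ j * 4) := by
    rw [one_div_pow, mul_one_div, pow_add]
    norm_num
  have mean_ge : 1 / 4 ≤ (S.card : ℝ) * (1 / 2) ^ (j + 2) := by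
    rw [mean_eq, le_div_iff₀ (by positivity)]
    linarith
  have mean_le : (S.card : ℝ) * (1 / 2) ^ (j + 2) ≤ 1 / 2 := by
    rw [mean_eq, div_le_iff₀ (by positivity)]
    linarith
  have p_le_one : (1 / 2 : ℝ) ^ (j + 2) ≤ 1 := pow_le_one₀ (by norm_num) (by norm_num)
  refine (missProb_le_one_sub_mean_mul (by positivity) p_le_one S).trans ?_
  nlinarith only [mean_ge, mean_le]

end RandomSubset

section Nor

variable {U κ : Type} [Fintype κ]

/-- The Boolean function that accepts exactly the all-`false` input. -/
noncomputable def nor (U : Type) : (U → Bool) → Bool := fun a => decide (a = ⊥)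

theorem nor_eq_true {a : U → Bool} : nor U a = true ↔ a = ⊥ := decide_eq_true_iff

/-- `∏ k, (1 - ∑ u ∈ R k, X u)`, which vanishes as soon as some `R k` contains exactly one `true`
coordinate of the input. -/
noncomputable def missPoly (R : κ → Finset U) : MvPolynomial U ℝ :=
  ∏ k, (1 - ∑ u ∈ R k, MvPolynomial.X u)

theorem totalDegree_missPoly_le (R : κ → Finset U) :
    (missPoly R).totalDegree ≤ Fintype.card κ := by
  refine (MvPolynomial.totalDegree_finsetProd _ _).trans ?_
  refine (Finset.sum_le_card_nsmul _ _ 1 fun k _ => ?_).trans_eq (mul_one _)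
  refine (MvPolynomial.totalDegree_sub _ _).trans (max_le ?_ ?_)
  · exact MvPolynomial.totalDegree_one.trans_le zero_le_one
  · exact MvPolynomial.totalDegree_finsetSum_le fun u _ => (MvPolynomial.totalDegree_X u).le

theorem evalBool_missPoly [Fintype U] (a : U → Bool) (R : κ → Finset U) :
    evalBool a (missPoly R) = ∏ k, (1 - ((R k ∩ ({u | a u} : Finset U)).card : ℝ)) := by
  simp only [evalBool, missPoly, map_prod, map_sub, map_one, map_sum, MvPolynomial.eval_X,
    Finset.sum_boole, Finset.inter_filter, Finset.inter_univ]

theorem hasProbPoly_nor_of_prod_missProb_le [Fintype U] {p : κ → ℝ} (hp₀ : ∀ k, 0 ≤ p k)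
    (hp₁ : ∀ k, p k ≤ 1) {ε : ℝ} (hε₀ : 0 ≤ ε)
    (hε : ∀ S : Finset U, S.Nonempty → ∏ k, missProb (p k) S ≤ ε) :
    HasProbPoly (nor U) ε (Fintype.card κ) := by
  refine .of_mem_stdSimplex (Ω := κ → Finset U)
    (prod_mem_stdSimplex fun k => subsetWeight_mem_stdSimplex (hp₀ k) (hp₁ k)) missPoly
    totalDegree_missPoly_le fun a => ?_
  set S : Finset U := {u | a u}
  by_cases ha : a = ⊥
  · have no_error (R : κ → Finset U) : evalBool a (missPoly R) = if nor U a then 1 else 0 := by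
      rw [evalBool_missPoly, if_pos (nor_eq_true.2 ha)]
      simp [ha]
    simpa [no_error] using hε₀
  · have S_nonempty : S.Nonempty := by
      obtain ⟨u, hu⟩ := Function.ne_iff.1 ha
      exact ⟨u, by simpa [S] using hu⟩
    have error_iff (R : κ → Finset U) : (evalBool a (missPoly R) ≠ if nor U a then 1 else 0) ↔
        ∀ k, (R k ∩ S).card ≠ 1 := by
      rw [evalBool_missPoly, if_neg (mt nor_eq_true.1 ha), Finset.prod_ne_zero_iff]
      simp only [Finset.mem_univ, true_imp_iff, sub_ne_zero, ne_comm (a := (1 : ℝ)),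
        Nat.cast_ne_one, S]
    have error_set : ({R | evalBool a (missPoly R) ≠ if nor U a then 1 else 0} :
        Finset (κ → Finset U)) = Fintype.piFinset fun _ => {R | (R ∩ S).card ≠ 1} := by
      ext R
      simp only [Finset.mem_filter_univ, error_iff, Fintype.mem_piFinset]
    rw [error_set, ← Finset.prod_univ_sum]
    exact hε S S_nonempty

theorem hasProbPoly_nor (U : Type) [Fintype U] (k : ℕ) :
    HasProbPoly (nor U) ((13 / 16) ^ k) (k * (Nat.log 2 (Fintype.card U) + 1)) := by
  set L := Nat.log 2 (Fintype.card U)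
  let p (x : Fin k × Fin (L + 1)) : ℝ := (1 / 2) ^ (x.2.val + 2)
  have hp₀ (x : Fin k × Fin (L + 1)) : 0 ≤ p x := by positivity
  have hp₁ (x : Fin k × Fin (L + 1)) : p x ≤ 1 := pow_le_one₀ (by norm_num) (by norm_num)
  suffices HasProbPoly (nor U) ((13 / 16) ^ k) (Fintype.card (Fin k × Fin (L + 1))) by
    simpa only [Fintype.card_prod, Fintype.card_fin] using this
  refine hasProbPoly_nor_of_prod_missProb_le hp₀ hp₁ (by positivity) fun S hS => ?_
  have level_lt : Nat.log 2 S.card < L + 1 :=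
    Nat.lt_succ_of_le (Nat.log_mono_right (Finset.card_le_univ S))
  calc ∏ x, missProb (p x) S
      ≤ ∏ i : Fin k, missProb (p (i, ⟨Nat.log 2 S.card, level_lt⟩)) S := by
        rw [Fintype.prod_prod_type]
        refine Finset.prod_le_prod (fun i _ => Finset.prod_nonneg fun j _ =>
          missProb_nonneg (hp₀ (i, j)) (hp₁ (i, j)) S) fun i _ => ?_
        rw [← Finset.prod_singleton (fun j => missProb (p (i, j)) S)]
        exact Finset.prod_le_prod_of_subset_of_le_one (Finset.subset_univ _)
          (fun j _ => missProb_nonneg (hp₀ (i, j)) (hp₁ (i, j)) S)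
          (fun j _ _ => missProb_le_one (hp₀ (i, j)) (hp₁ (i, j)) S)
    _ ≤ ∏ _i : Fin k, (13 / 16 : ℝ) := by
        refine Finset.prod_le_prod (fun i _ => missProb_nonneg (hp₀ _) (hp₁ _) S) fun i _ => ?_
        exact missProb_half_pow_log_le hS
    _ = (13 / 16) ^ k := by rw [Finset.prod_const, Finset.card_univ, Fintype.card_fin]

end Nor

section Addressing

variable {J B : Type}

/-- The one-hot encoding of an address `c`: block `j` has its only `true` bit at position `c j`. -/
noncomputable def oneHot (c : J → B) : J × B → Bool := fun x => decide (x.2 = c x.1)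

theorem oneHot_eq_true {c : J → B} {x : J × B} : oneHot c x = true ↔ x.2 = c x.1 :=
  decide_eq_true_iff

theorem eq_of_oneHot_le {c c' : J → B} (h : oneHot c ≤ oneHot c') : c = c' :=
  funext fun j => oneHot_eq_true.1 (h (j, c j) (oneHot_eq_true.2 rfl))

/-- The addressing function on the address set `T`: the address bits must form the one-hot encoding
of some `c ∈ T`, and the output is then the data bit stored at `c`. -/
noncomputable def addressing (T : Finset (J → B)) : ((J × B) ⊕ T → Bool) → Bool := fun a =>
  decide (∃ c : T, a ∘ Sum.inl = oneHot c ∧ a (Sum.inr c) = true)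

theorem addressing_eq_true {T : Finset (J → B)} {a : (J × B) ⊕ T → Bool} :
    addressing T a = true ↔ ∃ c : T, a ∘ Sum.inl = oneHot c ∧ a (Sum.inr c) = true :=
  decide_eq_true_iff

theorem trulyVariate_addressing {T : Finset (J → B)} (hT : ∀ j b, ∃ c ∈ T, c j = b) :
    TrulyVariate (addressing T) := by
  have minimal (c : T) : addressing T (Sum.elim (oneHot c) fun _ => true) = true ∧
      ∀ b ≤ Sum.elim (oneHot c) fun _ => true, addressing T b = true →
        b ∘ Sum.inl = oneHot c ∧ b (Sum.inr c) = true := by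
    refine ⟨addressing_eq_true.2 ⟨c, rfl, rfl⟩, fun b hb hfb => ?_⟩
    obtain ⟨c', hc', data⟩ := addressing_eq_true.1 hfb
    obtain rfl : c' = c :=
      Subtype.ext <| eq_of_oneHot_le <| hc'.symm.trans_le fun x => hb (Sum.inl x)
    exact ⟨hc', data⟩
  refine .of_forall_exists_minimal ?_
  rintro (⟨j, b⟩ | c)
  · obtain ⟨c, hcT, rfl⟩ := hT j b
    refine ⟨_, (minimal ⟨c, hcT⟩).1, fun b hb hfb => ?_⟩
    exact (congrFun ((minimal ⟨c, hcT⟩).2 b hb hfb).1 (j, c j)).trans (oneHot_eq_true.2 rfl)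
  · exact ⟨_, (minimal c).1, fun b hb hfb => ((minimal c).2 b hb hfb).2⟩

/-- The collision bits of a blocked input: bit `(j, b, b')` says that block `j` is `true` at the two
distinct positions `b` and `b'`. -/
noncomputable def collision {T : Finset (J → B)} (a : (J × B) ⊕ T → Bool) (x : J × B × B) : Bool :=
  decide (x.2.1 ≠ x.2.2 ∧ a (Sum.inl (x.1, x.2.1)) = true ∧ a (Sum.inl (x.1, x.2.2)) = true)

theorem collision_oneHot {T : Finset (J → B)} {a : (J × B) ⊕ T → Bool} {c : J → B}
    (h : a ∘ Sum.inl = oneHot c) : collision a = ⊥ := by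
  have address_bit {j : J} {b : B} (hb : a (Sum.inl (j, b)) = true) : b = c j :=
    oneHot_eq_true.1 ((congrFun h (j, b)).symm.trans hb)
  ext ⟨j, b, b'⟩
  refine decide_eq_false ?_
  rintro ⟨hne, hb, hb'⟩
  exact hne ((address_bit hb).trans (address_bit hb').symm)

theorem oneHot_of_collision_eq_bot {T : Finset (J → B)} {a : (J × B) ⊕ T → Bool} {c : J → B}
    (h : collision a = ⊥) (hc : ∀ j, a (Sum.inl (j, c j)) = true) : a ∘ Sum.inl = oneHot c := by
  ext ⟨j, b⟩
  by_cases hb : b = c j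
  · exact hb ▸ (hc j).trans (oneHot_eq_true.2 rfl).symm
  · have no_collision := of_decide_eq_false (congrFun h (j, b, c j))
    refine Eq.trans ?_ (decide_eq_false hb).symm
    exact Bool.eq_false_iff.2 fun hjb => no_collision ⟨hb, hjb, hc j⟩

/-- The polynomial that agrees with `addressing T` on collision-free inputs. -/
noncomputable def lookupPoly [Fintype J] (T : Finset (J → B)) : MvPolynomial ((J × B) ⊕ T) ℝ :=
  ∑ c : T, (∏ j, MvPolynomial.X (Sum.inl (j, c.1 j))) * MvPolynomial.X (Sum.inr c)

theorem totalDegree_lookupPoly_le [Fintype J] (T : Finset (J → B)) :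
    (lookupPoly T).totalDegree ≤ Fintype.card J + 1 := by
  refine MvPolynomial.totalDegree_finsetSum_le fun c _ => ?_
  refine (MvPolynomial.totalDegree_mul _ _).trans (add_le_add ?_ (MvPolynomial.totalDegree_X _).le)
  refine (MvPolynomial.totalDegree_finsetProd _ _).trans ?_
  simp only [MvPolynomial.totalDegree_X, Finset.sum_const, Finset.card_univ, smul_eq_mul, mul_one,
    le_refl]

theorem evalBool_lookupPoly [Fintype J] {T : Finset (J → B)} (a : (J × B) ⊕ T → Bool) :
    evalBool a (lookupPoly T) =
      ∑ c : T, if (∀ j, a (Sum.inl (j, c.1 j)) = true) ∧ a (Sum.inr c) = true then 1 else 0 := by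
  simp only [evalBool, lookupPoly, map_sum, map_mul, map_prod, MvPolynomial.eval_X,
    Finset.prod_ite_zero, Finset.mem_univ, true_imp_iff, Finset.prod_const_one, ite_and, ite_mul,
    one_mul, zero_mul]

theorem addressing_eq_lookupPoly_mul_nor_collision [Fintype J] {T : Finset (J → B)}
    (a : (J × B) ⊕ T → Bool) :
    (if addressing T a then (1 : ℝ) else 0) =
      evalBool a (lookupPoly T) * if nor _ (collision a) then 1 else 0 := by
  by_cases h : collision a = ⊥
  · have address_iff (c : T) : ((∀ j, a (Sum.inl (j, c.1 j)) = true) ∧ a (Sum.inr c) = true) ↔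
        a ∘ Sum.inl = oneHot c ∧ a (Sum.inr c) = true := by
      refine and_congr_left fun _ => ⟨oneHot_of_collision_eq_bot h, fun hc j => ?_⟩
      exact (congrFun hc (j, c.1 j)).trans (oneHot_eq_true.2 rfl)
    simp only [evalBool_lookupPoly, address_iff, nor_eq_true, h, if_true, mul_one]
    by_cases hf : addressing T a = true
    · obtain ⟨c, hc, data⟩ := addressing_eq_true.1 hf
      rw [if_pos hf, Finset.sum_eq_single c, if_pos ⟨hc, data⟩]
      · refine fun c' _ hne => if_neg fun hc' => hne ?_
        exact Subtype.ext (eq_of_oneHot_le (hc'.1.symm.trans hc).le)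
      · exact fun hmem => absurd (Finset.mem_univ c) hmem
    · rw [if_neg hf]
      refine (Finset.sum_eq_zero fun c _ => if_neg fun hc => hf ?_).symm
      exact addressing_eq_true.2 ⟨c, hc⟩
  · have hf : ¬ addressing T a = true := fun hf => by
      obtain ⟨c, hc, -⟩ := addressing_eq_true.1 hf
      exact h (collision_oneHot hc)
    rw [if_neg hf, if_neg (mt nor_eq_true.1 h), mul_zero]

/-- The degree-two polynomial computing the collision bit `x`. -/
noncomputable def collisionPoly (T : Finset (J → B)) (x : J × B × B) :
    MvPolynomial ((J × B) ⊕ T) ℝ :=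
  if x.2.1 ≠ x.2.2 then
    MvPolynomial.X (Sum.inl (x.1, x.2.1)) * MvPolynomial.X (Sum.inl (x.1, x.2.2))
  else 0

theorem totalDegree_collisionPoly_le (T : Finset (J → B)) (x : J × B × B) :
    (collisionPoly T x).totalDegree ≤ 2 := by
  unfold collisionPoly
  split_ifs
  · refine (MvPolynomial.totalDegree_mul _ _).trans ?_
    simp only [MvPolynomial.totalDegree_X, Nat.reduceAdd, le_refl]
  · exact MvPolynomial.totalDegree_zero.trans_le zero_le_two

theorem evalBool_collisionPoly {T : Finset (J → B)} (a : (J × B) ⊕ T → Bool) (x : J × B × B) :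
    evalBool a (collisionPoly T x) = if collision a x then 1 else 0 := by
  by_cases hx : x.2.1 = x.2.2
  · simp [collisionPoly, collision, evalBool, hx]
  · simp [collisionPoly, collision, evalBool, hx, ← ite_and, and_comm]

theorem hasProbPoly_addressing [Fintype J] [Fintype B] (T : Finset (J → B)) (k : ℕ) :
    HasProbPoly (addressing T) ((13 / 16) ^ k)
      (Fintype.card J + 1 + k * (Nat.log 2 (Fintype.card (J × B × B)) + 1) * 2) :=
  ((hasProbPoly_nor (J × B × B) k).comp (totalDegree_collisionPoly_le T)
    evalBool_collisionPoly).mul_left (totalDegree_lookupPoly_le T)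
    addressing_eq_lookupPoly_mul_nor_collision

end Addressing

theorem exists_trulyVariate_hasProbPoly {d n : ℕ} (hlow : (d + 1) * 2 ^ d ≤ n)
    (hup : n ≤ 2 ^ d ^ 2) :
    ∃ f : (Fin n → Bool) → Bool, TrulyVariate f ∧ HasProbPoly f (1 / 3) (37 * d + 13) := by
  obtain ⟨t, rfl⟩ := Nat.exists_eq_add_of_le hlow
  -- Storing data at all constant addresses makes every address bit relevant.
  let constants : Finset (Fin d → Fin (2 ^ d)) := Finset.univ.image (Function.const (Fin d))
  have const_card : constants.card ≤ 2 ^ d + t := Finset.card_image_le.trans (by simp)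
  have le_card : 2 ^ d + t ≤ Fintype.card (Fin d → Fin (2 ^ d)) := by
    rw [Fintype.card_fun, Fintype.card_fin, Fintype.card_fin, ← pow_mul, ← sq]
    exact (Nat.add_le_add_right (Nat.le_mul_of_pos_left _ d.succ_pos) t).trans hup
  obtain ⟨T, const_mem, card_T⟩ := Finset.exists_superset_card_eq const_card le_card
  have card_eq : Fintype.card ((Fin d × Fin (2 ^ d)) ⊕ T) = (d + 1) * 2 ^ d + t := by
    simp only [Fintype.card_sum, Fintype.card_prod, Fintype.card_fin, Fintype.card_coe, card_T]
    ring
  have log_card : Nat.log 2 (Fintype.card (Fin d × Fin (2 ^ d) × Fin (2 ^ d))) ≤ 3 * d := by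
    simp only [Fintype.card_prod, Fintype.card_fin]
    calc Nat.log 2 (d * (2 ^ d * 2 ^ d)) ≤ Nat.log 2 (2 ^ d * (2 ^ d * 2 ^ d)) :=
          Nat.log_mono_right (Nat.mul_le_mul_right _ Nat.lt_two_pow_self.le)
      _ = Nat.log 2 (2 ^ (3 * d)) := by ring_nf
      _ = 3 * d := Nat.log_pow one_lt_two _
  have addressing_truly : TrulyVariate (addressing T) := trulyVariate_addressing fun j b =>
    ⟨Function.const _ b, const_mem (Finset.mem_image_of_mem _ (Finset.mem_univ b)), rfl⟩
  have addressing_probPoly : HasProbPoly (addressing T) (1 / 3) (37 * d + 13) :=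
    (hasProbPoly_addressing T 6).mono (by norm_num) (by rw [Fintype.card_fin]; omega)
  let q := Fintype.equivFinOfCardEq card_eq
  exact ⟨_, addressing_truly.comp_equiv q, addressing_probPoly.comp_equiv q⟩

theorem sqrt_log_upper_bound :
    ∃ C : ℝ, 0 < C ∧ ∃ N : ℕ, ∀ n : ℕ, N ≤ n →
      ∃ f : (Fin n → Bool) → Bool, TrulyVariate f ∧
        (pdeg (1/3) f : ℝ) ≤ C * Real.sqrt (Real.logb 2 n) := by
  refine ⟨54, by norm_num, 2 ^ 9, fun n hn => ?_⟩
  set s := Nat.sqrt (Nat.log 2 n)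
  have n_ne_zero : n ≠ 0 := (hn.trans_lt' (by norm_num)).ne'
  have three_le : 3 ≤ s := Nat.le_sqrt.2 (Nat.le_log_of_pow_le one_lt_two hn)
  have hlow : (s + 1 + 1) * 2 ^ (s + 1) ≤ n :=
    calc (s + 1 + 1) * 2 ^ (s + 1) ≤ 2 ^ (s + 1) * 2 ^ (s + 1) :=
          Nat.mul_le_mul_right _ Nat.lt_two_pow_self
      _ = 2 ^ (2 * s + 2) := by ring
      _ ≤ 2 ^ s ^ 2 := Nat.pow_le_pow_right two_pos (by nlinarith)
      _ ≤ 2 ^ Nat.log 2 n := Nat.pow_le_pow_right two_pos (Nat.sqrt_le' _)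
      _ ≤ n := Nat.pow_log_le_self 2 n_ne_zero
  have hup : n ≤ 2 ^ (s + 1) ^ 2 :=
    (Nat.lt_pow_of_log_lt one_lt_two (Nat.lt_succ_sqrt' _)).le
  obtain ⟨f, f_truly, f_probPoly⟩ := exists_trulyVariate_hasProbPoly hlow hup
  refine ⟨f, f_truly, ?_⟩
  calc (pdeg (1 / 3) f : ℝ) ≤ (54 * s : ℕ) := by
        exact_mod_cast f_probPoly.pdeg_le.trans (by omega)
    _ = 54 * s := by push_cast; rfl
    _ ≤ 54 * √(Nat.log 2 n) := by gcongr; exact Real.nat_sqrt_le_real_sqrt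
    _ ≤ 54 * √(Real.logb 2 n) := by gcongr; exact Real.natLog_le_logb n 2
end
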